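/- arXiv:1305.3711 — 6 statements merged into one kernel-verified Lean document; each statement's English description precedes it below -/
import Mathlib

section
/- For every n ∈ ℕ, the Fisher information of the Rakhmanov density of the orthonormal Hermite polynomial equals F[ρ_n] = 4n + 2; equivalently, the Fisher length is (δx)_n = 1/√(4n+2). -/
open MeasureTheory Real

/-- The physicists' Hermite polynomial `H_n`. -/
noncomputable def hermiteH : ℕ → ℝ → ℝ
  | 0, _ => 1
  | 1, x => 2 * x
  | (n + 2), x => 2 * x * hermiteH (n + 1) x - 2 * ((n : ℝ) + 1) * hermiteH n x

/-- The Rakhmanov density of the orthonormal Hermite polynomial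
`p_n(x) = (2^n n! √π)^{-1/2} H_n(x)`, i.e. `ρ_n(x) = p_n(x)^2 e^{-x²}`. -/
noncomputable def hermiteρ (n : ℕ) (x : ℝ) : ℝ :=
  (hermiteH n x) ^ 2 * Real.exp (-x ^ 2) / (2 ^ n * (n.factorial : ℝ) * Real.sqrt π)

open Polynomial in
/-- Polynomial version of the Hermite functions. -/
noncomputable def hp : ℕ → Polynomial ℝ
  | 0 => 1
  | (n + 1) => 2 * X * hp n - derivative (hp n)

open Polynomial in
lemma hp_succ (n : ℕ) : hp (n + 1) = 2 * X * hp n - derivative (hp n) := rfl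

open Polynomial in
lemma derivative_hp_succ (n : ℕ) :
    derivative (hp (n + 1)) = 2 * ((n : Polynomial ℝ) + 1) * hp n := by
  induction n with
  | zero => simp [hp]
  | succ n ih =>
    rw [hp_succ (n + 1)]
    simp only [derivative_sub, derivative_mul, derivative_X, derivative_ofNat, ih,
      derivative_add, derivative_natCast, derivative_one]
    rw [hp_succ n]
    push_cast
    ring

open Polynomial in
lemma derivative2_hp (n : ℕ) :
    derivative (derivative (hp n)) = 2 * X * derivative (hp n) - 2 * (n : Polynomial ℝ) * hp n := by
  have h := derivative_hp_succ n
  rw [hp_succ] at h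
  simp only [derivative_sub, derivative_mul, derivative_X, derivative_ofNat] at h
  linear_combination -h

lemma hermiteH_eq (n : ℕ) (x : ℝ) : hermiteH n x = (hp n).eval x := by
  induction n using Nat.twoStepInduction with
  | zero => simp [hermiteH, hp]
  | one => simp [hermiteH, hp]
  | more n h1 h2 =>
    rw [hermiteH, h1, h2, hp_succ (n + 1), derivative_hp_succ]
    simp

lemma poly_integrable (p : Polynomial ℝ) :
    Integrable (fun x : ℝ => p.eval x * Real.exp (-x ^ 2)) := by
  induction p using Polynomial.induction_on' with
  | add p q hp hq =>
    simp only [Polynomial.eval_add, add_mul]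
    exact hp.add hq
  | monomial k a =>
    have h := integrable_rpow_mul_exp_neg_mul_sq (b := 1) one_pos
      (s := (k : ℝ)) (by have : (0 : ℝ) ≤ k := k.cast_nonneg
                         linarith)
    simpa [mul_assoc] using h.const_mul a

lemma exp_hasDeriv (x : ℝ) :
    HasDerivAt (fun x : ℝ => Real.exp (-x ^ 2)) (Real.exp (-x ^ 2) * (-(2 * x))) x := by
  have := ((hasDerivAt_pow 2 x).neg).exp
  simpa using this

open Polynomial in
lemma poly_ibp (p : Polynomial ℝ) :
    ∫ x : ℝ, (derivative p - 2 * X * p).eval x * Real.exp (-x ^ 2) = 0 := by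
  refine integral_eq_zero_of_hasDerivAt_of_integrable
    (f := fun x : ℝ => p.eval x * Real.exp (-x ^ 2)) (fun x => ?_)
    (poly_integrable _) (poly_integrable _)
  refine ((p.hasDerivAt x).mul (exp_hasDeriv x)).congr_deriv ?_
  simp
  ring

open Polynomial in
lemma poly_int_add_ibp (p q : Polynomial ℝ) :
    ∫ x : ℝ, (q + (derivative p - 2 * X * p)).eval x * Real.exp (-x ^ 2) =
      ∫ x : ℝ, q.eval x * Real.exp (-x ^ 2) := by
  have h := poly_ibp p
  simp only [eval_add (p := q), add_mul]
  rw [integral_add (poly_integrable _) (poly_integrable _), h, add_zero]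

lemma poly_int_const (a : ℝ) (q : Polynomial ℝ) :
    ∫ x : ℝ, (Polynomial.C a * q).eval x * Real.exp (-x ^ 2) =
      a * ∫ x : ℝ, q.eval x * Real.exp (-x ^ 2) := by
  rw [← integral_const_mul]
  simp [mul_assoc]

open Polynomial in
lemma hp_norm (n : ℕ) :
    ∫ x : ℝ, ((hp n) ^ 2).eval x * Real.exp (-x ^ 2) = 2 ^ n * (n.factorial : ℝ) * √π := by
  induction n with
  | zero =>
    have := integral_gaussian 1
    simpa [hp] using this
  | succ n ih =>
    have e : C (2 * ((n : ℝ) + 1)) * hp n ^ 2 = hp (n + 1) ^ 2 +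
        (derivative (hp n * hp (n + 1)) - 2 * X * (hp n * hp (n + 1))) := by
      rw [derivative_mul, derivative_hp_succ, hp_succ]
      simp only [C_mul, C_add, C_ofNat, map_natCast, C_1]
      ring
    rw [← poly_int_add_ibp (hp n * hp (n + 1)), ← e, poly_int_const, ih, Nat.factorial_succ]
    push_cast
    ring

lemma hp_ne_zero (n : ℕ) : hp n ≠ 0 := by
  intro h
  have h1 := hp_norm n
  rw [h] at h1
  have : (0 : ℝ) < 2 ^ n * (n.factorial : ℝ) * √π := by positivity
  rw [← h1] at this
  simp at this

open Polynomial in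
lemma hp_main (n : ℕ) :
    ∫ x : ℝ, (4 * (derivative (hp n) - X * hp n) ^ 2).eval x * Real.exp (-x ^ 2) =
      (4 * (n : ℝ) + 2) * (2 ^ n * (n.factorial : ℝ) * √π) := by
  have e : (4 * (derivative (hp n) - X * hp n) ^ 2 : Polynomial ℝ) =
      C (4 * (n : ℝ) + 2) * hp n ^ 2 +
        (derivative (hp n * derivative (hp n) - hp n * hp (n + 1) + C (1 / 2) *
          (derivative (hp n) * derivative (hp (n + 1)) - derivative (derivative (hp n)) * hp (n + 1)))
        - 2 * X * (hp n * derivative (hp n) - hp n * hp (n + 1) + C (1 / 2) *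
          (derivative (hp n) * derivative (hp (n + 1))
            - derivative (derivative (hp n)) * hp (n + 1)))) := by
    have hC : (C (1 / 2) : Polynomial ℝ) * 2 = 1 := by
      rw [← C_ofNat, ← C_mul]; norm_num
    simp only [derivative_hp_succ, derivative2_hp, derivative_sub, derivative_mul, derivative_add,
      derivative_X, derivative_ofNat, derivative_C, derivative_natCast, derivative_one]
    rw [hp_succ]
    simp only [C_mul, C_add, C_ofNat, map_natCast]
    generalize C (1 / 2 : ℝ) = c at hC
    generalize derivative (hp n) = d
    generalize hp n = h
    linear_combination (2 * d * (2 * X * h - d)) * hC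
  rw [e, poly_int_add_ibp, poly_int_const, hp_norm]

lemma deriv_rho (n : ℕ) (x : ℝ) : deriv (hermiteρ n) x =
    2 * (hp n).eval x * ((Polynomial.derivative (hp n)).eval x - x * (hp n).eval x)
      * Real.exp (-x ^ 2) / (2 ^ n * (n.factorial : ℝ) * √π) := by
  have e : hermiteρ n = fun x => ((hp n).eval x) ^ 2 * Real.exp (-x ^ 2) /
      (2 ^ n * (n.factorial : ℝ) * √π) := by
    funext x
    rw [hermiteρ, hermiteH_eq]
  rw [e]
  refine HasDerivAt.deriv ?_
  refine (((((hp n).hasDerivAt x).pow 2).mul (exp_hasDeriv x)).div_const _).congr_deriv ?_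
  simp
  ring

lemma fisher_main (n : ℕ) :
    (∫ x : ℝ, (deriv (hermiteρ n) x) ^ 2 / hermiteρ n x) = 4 * (n : ℝ) + 2 := by
  have hc : (0 : ℝ) < 2 ^ n * (n.factorial : ℝ) * √π := by positivity
  have hae : ∀ᵐ x : ℝ, (hp n).eval x ≠ 0 := by
    have hf : Set.Finite {x : ℝ | (hp n).eval x = 0} := by
      refine (hp n).roots.toFinset.finite_toSet.subset fun x hx => ?_
      simpa [hp_ne_zero n] using hx
    have := hf.measure_zero volume
    rw [ae_iff]
    simpa using this
  have : (∫ x : ℝ, (deriv (hermiteρ n) x) ^ 2 / hermiteρ n x) =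
      ∫ x : ℝ, (2 ^ n * (n.factorial : ℝ) * √π)⁻¹ *
        ((4 * (Polynomial.derivative (hp n) - Polynomial.X * hp n) ^ 2).eval x
          * Real.exp (-x ^ 2)) := by
    refine integral_congr_ae ?_
    filter_upwards [hae] with x hx
    rw [deriv_rho, hermiteρ, hermiteH_eq]
    have := (Real.exp_pos (-x ^ 2)).ne'
    generalize 2 ^ n * (n.factorial : ℝ) * √π = c at hc
    simp
    generalize Real.exp (-x ^ 2) = E at this
    field_simp
    ring
  rw [this, integral_const_mul, hp_main]
  field_simp

/-- For every `n ∈ ℕ`, the Fisher information of the Rakhmanov density of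
the orthonormal Hermite polynomial equals `4n + 2`; equivalently, the Fisher length is
`(δx)_n = 1/√(4n+2)`. -/
theorem hermite_fisher (n : ℕ) :
    (∫ x : ℝ, (deriv (hermiteρ n) x) ^ 2 / hermiteρ n x) = 4 * (n : ℝ) + 2 ∧
    (∫ x : ℝ, (deriv (hermiteρ n) x) ^ 2 / hermiteρ n x) ^ (-(1 / 2) : ℝ) =
      1 / Real.sqrt (4 * (n : ℝ) + 2) := by
  refine ⟨fisher_main n, ?_⟩
  rw [fisher_main, Real.rpow_neg (by positivity), Real.sqrt_eq_rpow, one_div, one_div]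
end

section
/- For every n ∈ ℕ, the Fisher information of the Rakhmanov density of the orthonormal Laguerre polynomial with parameter α = 0 equals F[ρ_{n,0}] = 4n + 1; equivalently, the Fisher length is (δx)_{n,0} = 1/√(4n+1). -/
open MeasureTheory Real

/-- The generalized Laguerre polynomial `L_n^{(α)}`. -/
noncomputable def laguerreL (α : ℝ) (n : ℕ) (x : ℝ) : ℝ :=
  ∑ k ∈ Finset.range (n + 1),
    (-1) ^ k * Real.Gamma ((n : ℝ) + α + 1) /
      (Real.Gamma ((k : ℝ) + α + 1) * ((n - k).factorial : ℝ) * (k.factorial : ℝ)) * x ^ k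

/-- The Rakhmanov density of the orthonormal Laguerre polynomial
`p_n^{(α)}(x) = (n!/Γ(n+α+1))^{1/2} L_n^{(α)}(x)`, i.e.
`ρ_{n,α}(x) = p_n^{(α)}(x)^2 x^α e^{-x}`. -/
noncomputable def laguerreρ (α : ℝ) (n : ℕ) (x : ℝ) : ℝ :=
  ((n.factorial : ℝ) / Real.Gamma ((n : ℝ) + α + 1)) * (laguerreL α n x) ^ 2 *
    x ^ α * Real.exp (-x)

/-- The Laguerre polynomial with parameter zero. -/
noncomputable def lagP (n : ℕ) : Polynomial ℝ :=
  ∑ k ∈ Finset.range (n + 1), Polynomial.monomial k ((-1) ^ k * (n.choose k : ℝ) / (k.factorial : ℝ))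

lemma lagP_coeff (n k : ℕ) :
    (lagP n).coeff k = (-1) ^ k * (n.choose k : ℝ) / (k.factorial : ℝ) := by
  unfold lagP
  rw [Polynomial.finsetSum_coeff]
  simp only [Polynomial.coeff_monomial]
  rw [Finset.sum_ite_eq']
  split_ifs with h
  · rfl
  · rw [Nat.choose_eq_zero_of_lt (by simpa using h)]; simp

lemma lagP_deriv (n : ℕ) :
    (lagP (n + 1)).derivative = (lagP n).derivative - lagP n := by
  ext k
  simp only [Polynomial.coeff_derivative, Polynomial.coeff_sub, lagP_coeff]
  rw [Nat.choose_succ_succ, Nat.factorial_succ]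
  have : (k.factorial : ℝ) ≠ 0 := by positivity
  have : (k : ℝ) + 1 ≠ 0 := by positivity
  push_cast
  field_simp
  ring

lemma lagP_zero (n : ℕ) : (lagP n).eval 0 = 1 := by
  rw [← Polynomial.coeff_zero_eq_eval_zero, lagP_coeff]; simp

lemma laguerreL_eq (n : ℕ) (x : ℝ) : laguerreL 0 n x = (lagP n).eval x := by
  unfold laguerreL lagP
  rw [Polynomial.eval_finsetSum]
  refine Finset.sum_congr rfl fun k hk => ?_
  have hk' : k ≤ n := by simpa [Nat.lt_succ_iff] using hk
  rw [Polynomial.eval_monomial, add_zero, add_zero, Real.Gamma_nat_eq_factorial,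
    Real.Gamma_nat_eq_factorial, Nat.cast_choose ℝ hk']
  have : (k.factorial : ℝ) ≠ 0 := by positivity
  have : ((n - k).factorial : ℝ) ≠ 0 := by positivity
  field_simp

lemma laguerreρ_eq (n : ℕ) : laguerreρ 0 n = fun x => ((lagP n).eval x) ^ 2 * Real.exp (-x) := by
  ext x
  unfold laguerreρ
  have : (n.factorial : ℝ) ≠ 0 := by positivity
  rw [laguerreL_eq, add_zero, Real.Gamma_nat_eq_factorial, div_self this, Real.rpow_zero]
  ring

lemma integ (p : Polynomial ℝ) :
    IntegrableOn (fun x => p.eval x * Real.exp (-x)) (Set.Ioi (0 : ℝ)) := by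
  induction p using Polynomial.induction_on' with
  | add p q hp hq =>
    simp only [Polynomial.eval_add, add_mul]
    exact hp.add hq
  | monomial k a =>
    have h := (Real.GammaIntegral_convergent (s := (k : ℝ) + 1) (by positivity)).const_mul a
    refine h.congr (Filter.Eventually.of_forall fun x => ?_)
    simp only [add_sub_cancel_right, Real.rpow_natCast, Polynomial.eval_monomial]
    ring

/-- The Laguerre functional. -/
noncomputable def Lam (p : Polynomial ℝ) : ℝ :=
  ∫ x in Set.Ioi (0 : ℝ), p.eval x * Real.exp (-x)

lemma Lam_add (p q : Polynomial ℝ) : Lam (p + q) = Lam p + Lam q := by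
  unfold Lam
  rw [← integral_add (integ p) (integ q)]
  simp only [Polynomial.eval_add, add_mul]

lemma Lam_sub (p q : Polynomial ℝ) : Lam (p - q) = Lam p - Lam q := by
  unfold Lam
  rw [← integral_sub (integ p) (integ q)]
  simp only [Polynomial.eval_sub, sub_mul]

lemma Lam_deriv (p : Polynomial ℝ) : Lam p.derivative = Lam p - p.eval 0 := by
  have h := integral_Ioi_of_hasDerivAt_of_tendsto' (a := (0 : ℝ)) (m := 0)
    (f := fun x => p.eval x * Real.exp (-x))
    (f' := fun x => (p.derivative - p).eval x * Real.exp (-x))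
    (fun x _ => by
      have := (p.hasDerivAt x).mul ((hasDerivAt_neg x).exp)
      refine this.congr_deriv ?_
      rw [Polynomial.eval_sub]; ring) (integ _)
    (by
      have := Polynomial.tendsto_div_exp_atTop p
      refine this.congr fun x => ?_
      rw [Real.exp_neg, div_eq_mul_inv])
  have h2 : Lam (p.derivative - p) = 0 - p.eval 0 := by
    unfold Lam; rw [h]; simp
  rw [Lam_sub] at h2
  linarith

lemma Lam_ibp (p q : Polynomial ℝ) :
    Lam (p.derivative * q) + Lam (p * q.derivative) = Lam (p * q) - p.eval 0 * q.eval 0 := by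
  rw [← Lam_add, ← Polynomial.derivative_mul, Lam_deriv, Polynomial.eval_mul]

lemma Lam_facts (n : ℕ) :
    Lam (lagP n * lagP n) = 1 ∧ Lam (lagP n * (lagP n).derivative) = 0 ∧
      Lam ((lagP n).derivative * (lagP n).derivative) = n := by
  induction n with
  | zero =>
    have h : lagP 0 = 1 := by simp [lagP]
    have h0 : Lam 0 = 0 := by simp [Lam]
    have h1 := Lam_deriv 1
    simp only [h, Polynomial.derivative_one, mul_zero, mul_one, h0, Polynomial.eval_one] at h1 ⊢
    refine ⟨by linarith, trivial, by simp⟩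
  | succ n ih =>
    obtain ⟨h1, h2, h3⟩ := ih
    have hd := lagP_deriv n
    have e1 := Lam_ibp (lagP (n + 1)) (lagP n)
    have e2 := Lam_ibp (lagP (n + 1)) (lagP (n + 1))
    simp only [lagP_zero] at e1 e2
    have c := mul_comm (lagP (n + 1)).derivative (lagP (n + 1))
    rw [c] at e2
    have f1 : Lam ((lagP (n + 1)).derivative * lagP n) = -1 := by
      rw [hd, sub_mul, Lam_sub, mul_comm, h2, h1]; ring
    have f2 : Lam (lagP (n + 1) * (lagP (n + 1)).derivative) = 0 := by
      rw [hd, mul_sub, Lam_sub]; linarith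
    refine ⟨by linarith, f2, ?_⟩
    rw [hd, sub_mul, mul_sub, mul_sub, Lam_sub, Lam_sub, Lam_sub, mul_comm _ (lagP n), h1, h2, h3]
    push_cast; ring

lemma fisher_eq (n : ℕ) :
    (∫ x in Set.Ioi (0 : ℝ), (deriv (laguerreρ 0 n) x) ^ 2 / laguerreρ 0 n x) =
      4 * (n : ℝ) + 1 := by
  set P := lagP n with hP
  have hne : P ≠ 0 := by
    intro h
    have := lagP_zero n
    rw [← hP, h] at this
    simp at this
  have key : (∫ x in Set.Ioi (0 : ℝ), (deriv (laguerreρ 0 n) x) ^ 2 / laguerreρ 0 n x) =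
      Lam ((P.derivative + P.derivative - P) * (P.derivative + P.derivative - P)) := by
    unfold Lam
    refine integral_congr_ae (ae_restrict_of_ae ?_)
    have hfin : {x : ℝ | P.IsRoot x}.Finite := Polynomial.finite_setOfPred_isRoot hne
    have hae : ∀ᵐ x : ℝ, ¬ P.IsRoot x := by
      rw [ae_iff]
      simpa using hfin.measure_zero volume
    filter_upwards [hae] with x hx
    have hx' : P.eval x ≠ 0 := hx
    have hder : deriv (laguerreρ 0 n) x =
        (2 * P.eval x * P.derivative.eval x - P.eval x ^ 2) * Real.exp (-x) := by
      rw [laguerreρ_eq]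
      have := ((P.hasDerivAt x).pow 2).mul ((hasDerivAt_neg x).exp)
      refine (this.congr_deriv ?_).deriv
      simp only [Pi.pow_apply]
      push_cast
      ring
    rw [hder, laguerreρ_eq]
    have he : Real.exp (-x) ≠ 0 := (Real.exp_pos _).ne'
    simp only [Polynomial.eval_mul, Polynomial.eval_sub, Polynomial.eval_add, ← hP]
    field_simp
    ring
  obtain ⟨h1, h2, h3⟩ := Lam_facts n
  rw [← hP] at h1 h2 h3
  rw [key]
  simp only [sub_mul, mul_sub, add_mul, mul_add, Lam_sub, Lam_add, mul_comm P.derivative P, h1, h2, h3]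
  ring

/-- For every `n ∈ ℕ`, the Fisher information of the Rakhmanov density of
the orthonormal Laguerre polynomial with `α = 0` equals `4n + 1`; equivalently, the Fisher
length is `1/√(4n+1)`. -/
theorem laguerre_fisher_alpha_zero (n : ℕ) :
    (∫ x in Set.Ioi (0 : ℝ), (deriv (laguerreρ 0 n) x) ^ 2 / laguerreρ 0 n x) =
      4 * (n : ℝ) + 1 ∧
    (∫ x in Set.Ioi (0 : ℝ), (deriv (laguerreρ 0 n) x) ^ 2 / laguerreρ 0 n x) ^
        (-(1 / 2) : ℝ) = 1 / Real.sqrt (4 * (n : ℝ) + 1) := by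
  refine ⟨fisher_eq n, ?_⟩
  rw [fisher_eq n, Real.rpow_neg (by positivity), ← Real.sqrt_eq_rpow, one_div]
end

section
/- For every n ∈ ℕ and every real α with −1 < α ≤ 1 and α ≠ 0, the Fisher information integral of the Rakhmanov density of the orthonormal Laguerre polynomial diverges: ∫_0^∞ (ρ_{n,α}′(x))²/ρ_{n,α}(x) dx = +∞; equivalently, the Fisher length (δx)_{n,α} = 0. -/
open MeasureTheory Real

lemma laguerreL_contDiff (α : ℝ) (n : ℕ) : ContDiff ℝ 1 (laguerreL α n) := by
  unfold laguerreL
  fun_prop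

lemma laguerreL_zero_pos (α : ℝ) (n : ℕ) (h1 : -1 < α) : 0 < laguerreL α n 0 := by
  unfold laguerreL
  rw [Finset.sum_eq_single 0]
  · have hn : (0 : ℝ) ≤ n := Nat.cast_nonneg n
    have a1 := Real.Gamma_pos_of_pos (show (0 : ℝ) < (n : ℝ) + α + 1 by linarith)
    have a2 := Real.Gamma_pos_of_pos (show (0 : ℝ) < ((0 : ℕ) : ℝ) + α + 1 by
      push_cast; linarith)
    simp only [pow_zero, one_mul, mul_one]
    positivity
  · intro b _ hb
    simp [hb]
  · simp

lemma lintegral_inv_top (δ : ℝ) (hδ : 0 < δ) :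
    ∫⁻ x in Set.Ioc (0 : ℝ) δ, ENNReal.ofReal (x⁻¹) = ⊤ := by
  by_contra h
  have hm : AEStronglyMeasurable (fun x : ℝ => x⁻¹) (volume.restrict (Set.Ioc (0 : ℝ) δ)) :=
    measurable_inv.aestronglyMeasurable
  have hnn : 0 ≤ᵐ[volume.restrict (Set.Ioc (0 : ℝ) δ)] (fun x : ℝ => x⁻¹) := by
    refine (ae_restrict_iff' measurableSet_Ioc).2 (Filter.Eventually.of_forall ?_)
    intro x hx
    exact (inv_pos.2 hx.1).le
  have hi := (lintegral_ofReal_ne_top_iff_integrable hm hnn).1 h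
  have h2 : IntervalIntegrable (fun x : ℝ => x⁻¹) volume 0 δ :=
    (intervalIntegrable_iff_integrableOn_Ioc_of_le hδ.le).2 hi
  rw [intervalIntegrable_inv_iff] at h2
  rcases h2 with h2 | h2
  · exact hδ.ne h2
  · exact h2 Set.left_mem_uIcc

/-- The Fisher integrand in closed form. -/
lemma fisher_integrand (α : ℝ) (n : ℕ) (x : ℝ) (hx : 0 < x) (hL : laguerreL α n x ≠ 0)
    (hC : (n.factorial : ℝ) / Real.Gamma ((n : ℝ) + α + 1) ≠ 0) :
    (deriv (laguerreρ α n) x) ^ 2 / laguerreρ α n x =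
      ((n.factorial : ℝ) / Real.Gamma ((n : ℝ) + α + 1)) * Real.exp (-x) *
        (2 * x * deriv (laguerreL α n) x + α * laguerreL α n x - x * laguerreL α n x) ^ 2 *
        x ^ (α - 2) := by
  have hd : HasDerivAt (laguerreL α n) (deriv (laguerreL α n) x) x :=
    ((laguerreL_contDiff α n).differentiable (by norm_num) x).hasDerivAt
  have h1 := (((hd.pow 2).const_mul ((n.factorial : ℝ) / Real.Gamma ((n : ℝ) + α + 1))).mul
    (Real.hasDerivAt_rpow_const (p := α) (Or.inl hx.ne'))).mul (hasDerivAt_neg x).exp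
  have h2 : deriv (laguerreρ α n) x = _ := h1.deriv
  rw [h2]
  unfold laguerreρ
  have e1 : x ^ (α - 1) = x ^ α / x := by rw [Real.rpow_sub_one hx.ne']
  have e2 : x ^ (α - 2) = x ^ α / x ^ 2 := by
    rw [Real.rpow_sub hx]; norm_num
  simp only [Pi.mul_apply, Pi.pow_apply]
  rw [e1, e2]
  have hp := (Real.rpow_pos_of_pos hx α).ne'
  have he := (Real.exp_pos (-x)).ne'
  generalize (n.factorial : ℝ) / Real.Gamma ((n : ℝ) + α + 1) = C at *
  generalize x ^ α = P at *
  generalize Real.exp (-x) = E at *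
  generalize deriv (laguerreL α n) x = D at *
  generalize laguerreL α n x = L at *
  field_simp
  ring

/-- For every `n ∈ ℕ` and real `α` with `−1 < α ≤ 1`, `α ≠ 0`, the Fisher
information integral of the Rakhmanov density of the orthonormal Laguerre polynomial
diverges: `∫_0^∞ (ρ_{n,α}')²/ρ_{n,α} = +∞`. -/
theorem laguerre_fisher_diverges (n : ℕ) (α : ℝ) (h1 : -1 < α) (h2 : α ≤ 1) (h3 : α ≠ 0) :
    ∫⁻ x in Set.Ioi (0 : ℝ),
      ENNReal.ofReal ((deriv (laguerreρ α n) x) ^ 2 / laguerreρ α n x) = ⊤ := by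
  have hn : (0 : ℝ) ≤ n := Nat.cast_nonneg n
  have hG := Real.Gamma_pos_of_pos (show (0 : ℝ) < (n : ℝ) + α + 1 by linarith)
  have hC : 0 < (n.factorial : ℝ) / Real.Gamma ((n : ℝ) + α + 1) := by positivity
  have hL0 := laguerreL_zero_pos α n h1
  have hcL : Continuous (laguerreL α n) := (laguerreL_contDiff α n).continuous
  have hcD : Continuous (deriv (laguerreL α n)) :=
    (laguerreL_contDiff α n).continuous_deriv le_rfl
  let g : ℝ → ℝ := fun x => ((n.factorial : ℝ) / Real.Gamma ((n : ℝ) + α + 1)) * Real.exp (-x) *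
        (2 * x * deriv (laguerreL α n) x + α * laguerreL α n x - x * laguerreL α n x) ^ 2
  have hg : Continuous g := by fun_prop
  have hg0 : 0 < g 0 := by
    have : α * laguerreL α n 0 ≠ 0 := mul_ne_zero h3 hL0.ne'
    simp only [g, neg_zero, Real.exp_zero, mul_zero, zero_mul, zero_add, sub_zero, mul_one]
    positivity
  obtain ⟨c, hc0, hcg⟩ := exists_between hg0
  have ev : ∀ᶠ x in nhds (0 : ℝ), c < g x ∧ 0 < laguerreL α n x :=
    (hg.continuousAt.eventually (lt_mem_nhds hcg)).and
      (hcL.continuousAt.eventually (lt_mem_nhds hL0))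
  obtain ⟨ε, hε, hball⟩ := Metric.eventually_nhds_iff.1 ev
  let δ := min (ε / 2) 1
  have hδ : 0 < δ := lt_min (by linarith) one_pos
  rw [eq_top_iff]
  calc (⊤ : ENNReal) = ENNReal.ofReal c * ∫⁻ x in Set.Ioc (0 : ℝ) δ, ENNReal.ofReal (x⁻¹) := by
        rw [lintegral_inv_top δ hδ, ENNReal.mul_top]
        simpa using hc0
    _ = ∫⁻ x in Set.Ioc (0 : ℝ) δ, ENNReal.ofReal c * ENNReal.ofReal (x⁻¹) := by
        rw [lintegral_const_mul' _ _ ENNReal.ofReal_ne_top]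
    _ ≤ ∫⁻ x in Set.Ioc (0 : ℝ) δ,
          ENNReal.ofReal ((deriv (laguerreρ α n) x) ^ 2 / laguerreρ α n x) := by
        refine setLIntegral_mono' measurableSet_Ioc ?_
        intro x hx
        have hx1 : x ≤ 1 := hx.2.trans (min_le_right _ _)
        have hx2 : x ≤ ε / 2 := hx.2.trans (min_le_left _ _)
        obtain ⟨b1, b2⟩ := hball (y := x) (by
          rw [Real.dist_eq, sub_zero, abs_of_pos hx.1]; linarith)
        rw [← ENNReal.ofReal_mul hc0.le]
        apply ENNReal.ofReal_le_ofReal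
        rw [fisher_integrand α n x hx.1 b2.ne' hC.ne']
        have hle : x⁻¹ ≤ x ^ (α - 2) := by
          rw [← Real.rpow_neg_one]
          exact Real.rpow_le_rpow_of_exponent_ge hx.1 hx1 (by linarith)
        exact mul_le_mul b1.le hle (inv_pos.2 hx.1).le (hc0.le.trans b1.le)
    _ ≤ _ := lintegral_mono_set Set.Ioc_subset_Ioi_self
end

section
/- For every n ∈ ℕ and reals α > 1, β > 1, the Fisher information of the Rakhmanov density of the orthonormal Jacobi polynomial equals F[ρ_{n,α,β}] = (2n+α+β+1)/(4(n+α+β−1)) · [ n(n+α+β−1)( (n+α)/(β+1) + 2 + (n+β)/(α+1) ) + (n+1)(n+α+β)( (n+α)/(β−1) + 2 + (n+β)/(α−1) ) ]. -/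
open MeasureTheory Real

/-- The Jacobi polynomial `P_n^{(α,β)}`. -/
noncomputable def jacobiP (α β : ℝ) (n : ℕ) (x : ℝ) : ℝ :=
  ∑ s ∈ Finset.range (n + 1),
    (Real.Gamma ((n : ℝ) + α + 1) / (Real.Gamma (α + (s : ℝ) + 1) * ((n - s).factorial : ℝ))) *
    (Real.Gamma ((n : ℝ) + β + 1) / (Real.Gamma ((n : ℝ) + β - (s : ℝ) + 1) * (s.factorial : ℝ))) *
    ((x - 1) / 2) ^ s * ((x + 1) / 2) ^ (n - s)

/-- The normalization constant `h_n` of the Jacobi polynomials. -/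
noncomputable def jacobih (α β : ℝ) (n : ℕ) : ℝ :=
  2 ^ (α + β + 1) * Real.Gamma ((n : ℝ) + α + 1) * Real.Gamma ((n : ℝ) + β + 1) /
    ((2 * (n : ℝ) + α + β + 1) * (n.factorial : ℝ) * Real.Gamma ((n : ℝ) + α + β + 1))

/-- The Rakhmanov density of the orthonormal Jacobi polynomial
`p_n^{(α,β)}(x) = h_n^{-1/2} P_n^{(α,β)}(x)`, i.e.
`ρ_{n,α,β}(x) = p_n^{(α,β)}(x)^2 (1-x)^α (1+x)^β`. -/
noncomputable def jacobiρ (α β : ℝ) (n : ℕ) (x : ℝ) : ℝ :=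
  (jacobiP α β n x) ^ 2 / jacobih α β n * (1 - x) ^ α * (1 + x) ^ β


/-- Coefficient in the explicit sum. -/
noncomputable def jc (α β : ℝ) (n s : ℕ) : ℝ :=
  (Real.Gamma ((n : ℝ) + α + 1) / (Real.Gamma (α + (s : ℝ) + 1) * ((n - s).factorial : ℝ))) *
    (Real.Gamma ((n : ℝ) + β + 1) / (Real.Gamma ((n : ℝ) + β - (s : ℝ) + 1) * (s.factorial : ℝ)))

/-- Jacobi polynomial as a polynomial. -/
noncomputable def jpoly (α β : ℝ) (n : ℕ) : Polynomial ℝ :=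
  ∑ s ∈ Finset.range (n + 1), Polynomial.C (jc α β n s) *
    (Polynomial.C (1/2) * (Polynomial.X - 1)) ^ s *
    (Polynomial.C (1/2) * (Polynomial.X + 1)) ^ (n - s)

lemma jacobiP_eq_sum (α β : ℝ) (n : ℕ) (x : ℝ) : jacobiP α β n x =
    ∑ s ∈ Finset.range (n + 1), jc α β n s * (((x - 1) / 2) ^ s * ((x + 1) / 2) ^ (n - s)) := by
  unfold jacobiP jc
  refine Finset.sum_congr rfl fun s _ => by ring

lemma jpoly_eval (α β : ℝ) (n : ℕ) (x : ℝ) : (jpoly α β n).eval x = jacobiP α β n x := by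
  rw [jacobiP_eq_sum, jpoly, Polynomial.eval_finsetSum]
  refine Finset.sum_congr rfl fun s _ => ?_
  simp only [Polynomial.eval_mul, Polynomial.eval_C, Polynomial.eval_pow, Polynomial.eval_sub,
    Polynomial.eval_add, Polynomial.eval_X, Polynomial.eval_one]
  rw [show (1/2:ℝ) * (x - 1) = (x-1)/2 by ring, show (1/2:ℝ) * (x + 1) = (x+1)/2 by ring]
  ring

lemma jpoly_natDegree (α β : ℝ) (n : ℕ) : (jpoly α β n).natDegree ≤ n := by
  refine Polynomial.natDegree_sum_le_of_forall_le _ _ fun s hs => ?_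
  have hs' : s ≤ n := by simpa [Nat.lt_succ_iff] using hs
  have h1 : (Polynomial.C (1/2:ℝ) * (Polynomial.X - 1)).natDegree ≤ 1 := by
    compute_degree
  have h2 : (Polynomial.C (1/2:ℝ) * (Polynomial.X + 1)).natDegree ≤ 1 := by
    compute_degree
  refine Polynomial.natDegree_mul_le.trans ?_
  have a1 := Polynomial.natDegree_C_mul_le (jc α β n s) ((Polynomial.C (1/2:ℝ) * (Polynomial.X - 1))^s)
  have a2 := Polynomial.natDegree_pow_le_of_le s h1
  have a3 := Polynomial.natDegree_pow_le_of_le (n-s) h2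
  omega

lemma jpoly_deriv_eval (α β : ℝ) (n : ℕ) (x : ℝ) : (jpoly α β n).derivative.eval x =
    ∑ s ∈ Finset.range (n + 1), jc α β n s * ((1/2) * (s * ((x - 1) / 2) ^ (s-1) * ((x + 1) / 2) ^ (n - s)
      + ((n - s : ℕ) : ℝ) * ((x - 1) / 2) ^ s * ((x + 1) / 2) ^ (n - s - 1))) := by
  rw [jpoly, Polynomial.derivative_sum, Polynomial.eval_finsetSum]
  refine Finset.sum_congr rfl fun s _ => ?_
  simp only [Polynomial.derivative_mul, Polynomial.derivative_pow, Polynomial.derivative_C,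
    Polynomial.derivative_X, Polynomial.derivative_add, Polynomial.derivative_sub, Polynomial.derivative_one,
    Polynomial.eval_mul, Polynomial.eval_C, Polynomial.eval_pow, Polynomial.eval_sub,
    Polynomial.eval_add, Polynomial.eval_X, Polynomial.eval_one, Polynomial.eval_zero]
  rw [show (1/2:ℝ) * (x - 1) = (x-1)/2 by ring, show (1/2:ℝ) * (x + 1) = (x+1)/2 by ring]
  ring

lemma jc_A (α β : ℝ) (hα : -1 < α) (hβ : -1 < β) (n t : ℕ) (ht : t ≤ n) :
    ((t:ℝ)+1) * jc α β (n+1) (t+1) + ((n:ℝ)+1-t) * jc α β (n+1) t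
      = ((n:ℝ)+1+α+β+1) * jc (α+1) (β+1) n t := by
  obtain ⟨m, rfl⟩ := Nat.exists_eq_add_of_le ht
  have e1 : t + m + 1 - (t+1) = m := by omega
  have e2 : t + m + 1 - t = m+1 := by omega
  have e3 : t + m - t = m := by omega
  have hm : (0:ℝ) ≤ m := Nat.cast_nonneg m
  have ht0 : (0:ℝ) ≤ t := Nat.cast_nonneg t
  have G1 : Real.Gamma (α + t + 1 + 1) = (α+t+1) * Real.Gamma (α+t+1) :=
    Real.Gamma_add_one (by linarith)
  have G2 : Real.Gamma (m + β + 1 + 1) = (m+β+1) * Real.Gamma (m+β+1) :=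
    Real.Gamma_add_one (by linarith)
  have g1 : Real.Gamma (α+t+1) ≠ 0 := (Real.Gamma_pos_of_pos (by linarith)).ne'
  have g2 : Real.Gamma (m+β+1) ≠ 0 := (Real.Gamma_pos_of_pos (by linarith)).ne'
  unfold jc
  rw [e1, e2, e3, Nat.factorial_succ, Nat.factorial_succ]
  push_cast
  rw [show α + ((t:ℝ)+1) + 1 = α + t + 1 + 1 by ring,
    show ((t:ℝ) + m + 1 + β - (t+1) + 1) = m + β + 1 by ring,
    show ((t:ℝ) + m + 1 + β - t + 1) = m + β + 1 + 1 by ring,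
    show α + 1 + (t:ℝ) + 1 = α + t + 1 + 1 by ring,
    show ((t:ℝ) + m + (β + 1) - t + 1) = m + β + 1 + 1 by ring,
    show (t:ℝ) + m + 1 + α + 1 = t + m + α + 2 by ring,
    show (t:ℝ) + m + 1 + β + 1 = t + m + β + 2 by ring,
    show (t:ℝ) + m + (α + 1) + 1 = t + m + α + 2 by ring,
    show (t:ℝ) + m + (β + 1) + 1 = t + m + β + 2 by ring, G1, G2]
  have n1 : α + t + 1 ≠ 0 := by linarith
  have n2 : m + β + 1 ≠ 0 := by linarith
  have n3 : (m:ℝ) + 1 ≠ 0 := by linarith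
  have n4 : (t:ℝ) + 1 ≠ 0 := by linarith
  have f1 : (m.factorial : ℝ) ≠ 0 := by positivity
  have f2 : (t.factorial : ℝ) ≠ 0 := by positivity
  field_simp
  ring

lemma jc_B1 (α β : ℝ) (hα : 0 < α) (hβ : 0 < β) (n s : ℕ) (hs : s ≤ n) :
    ((n:ℝ)+1-s) * jc (α-1) (β-1) (n+1) s = (s+α) * jc α β n s := by
  obtain ⟨m, rfl⟩ := Nat.exists_eq_add_of_le hs
  have e2 : s + m + 1 - s = m+1 := by omega
  have e3 : s + m - s = m := by omega
  have hm : (0:ℝ) ≤ m := Nat.cast_nonneg m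
  have ht0 : (0:ℝ) ≤ s := Nat.cast_nonneg s
  have G1 : Real.Gamma (α + s + 1) = (α+s) * Real.Gamma (α+s) :=
    Real.Gamma_add_one (by linarith)
  have g1 : Real.Gamma (α+s) ≠ 0 := (Real.Gamma_pos_of_pos (by linarith)).ne'
  have g2 : Real.Gamma (m+β+1) ≠ 0 := (Real.Gamma_pos_of_pos (by linarith)).ne'
  unfold jc
  rw [e2, e3, Nat.factorial_succ]
  push_cast
  rw [show α - 1 + (s:ℝ) + 1 = α + s by ring,
    show ((s:ℝ) + m + 1 + (β-1) - s + 1) = m + β + 1 by ring,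
    show ((s:ℝ) + m + β - s + 1) = m + β + 1 by ring,
    show (s:ℝ) + m + 1 + (α - 1) + 1 = s + m + α + 1 by ring,
    show (s:ℝ) + m + 1 + (β - 1) + 1 = s + m + β + 1 by ring, G1]
  have n1 : α + s ≠ 0 := by linarith
  have n3 : (m:ℝ) + 1 ≠ 0 := by linarith
  have f1 : (m.factorial : ℝ) ≠ 0 := by positivity
  have f2 : (s.factorial : ℝ) ≠ 0 := by positivity
  field_simp
  ring

lemma jc_B2 (α β : ℝ) (hα : 0 < α) (hβ : 0 < β) (n s : ℕ) (hs : s ≤ n) :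
    ((s:ℝ)+1) * jc (α-1) (β-1) (n+1) (s+1) = ((n:ℝ)-s+β) * jc α β n s := by
  obtain ⟨m, rfl⟩ := Nat.exists_eq_add_of_le hs
  have e2 : s + m + 1 - (s+1) = m := by omega
  have e3 : s + m - s = m := by omega
  have hm : (0:ℝ) ≤ m := Nat.cast_nonneg m
  have ht0 : (0:ℝ) ≤ s := Nat.cast_nonneg s
  have G1 : Real.Gamma (m + β + 1) = (m+β) * Real.Gamma (m+β) :=
    Real.Gamma_add_one (by linarith)
  have g1 : Real.Gamma (α+s+1) ≠ 0 := (Real.Gamma_pos_of_pos (by linarith)).ne'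
  have g2 : Real.Gamma (m+β) ≠ 0 := (Real.Gamma_pos_of_pos (by linarith)).ne'
  unfold jc
  rw [e2, e3, Nat.factorial_succ]
  push_cast
  rw [show α - 1 + ((s:ℝ) + 1) + 1 = α + s + 1 by ring,
    show ((s:ℝ) + m + 1 + (β-1) - (s + 1) + 1) = m + β by ring,
    show ((s:ℝ) + m + β - s + 1) = m + β + 1 by ring,
    show (s:ℝ) + m + 1 + (α - 1) + 1 = s + m + α + 1 by ring,
    show (s:ℝ) + m + 1 + (β - 1) + 1 = s + m + β + 1 by ring, G1]
  have n1 : m + β ≠ 0 := by linarith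
  have n3 : (s:ℝ) + 1 ≠ 0 := by linarith
  have f1 : (m.factorial : ℝ) ≠ 0 := by positivity
  have f2 : (s.factorial : ℝ) ≠ 0 := by positivity
  field_simp
  ring

lemma jacobi_A (α β : ℝ) (hα : -1 < α) (hβ : -1 < β) (n : ℕ) (x : ℝ) :
    (jpoly α β (n+1)).derivative.eval x
      = ((n:ℝ)+1+α+β+1)/2 * jacobiP (α+1) (β+1) n x := by
  rw [jpoly_deriv_eval, jacobiP_eq_sum]
  simp only [mul_add, Finset.sum_add_distrib]
  rw [Finset.sum_range_succ', Finset.sum_range_succ (n := n+1)]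
  simp only [Nat.sub_self, Nat.cast_zero, zero_mul, mul_zero, add_zero]
  rw [← Finset.sum_add_distrib, Finset.mul_sum]
  refine Finset.sum_congr rfl fun t ht => ?_
  have ht' : t ≤ n := by simpa [Nat.lt_succ_iff] using ht
  have h := jc_A α β hα hβ n t ht'
  rw [show n + 1 - (t+1) = n - t by omega, show n + 1 - t - 1 = n - t by omega,
    Nat.cast_sub (by omega), Nat.add_sub_cancel]
  push_cast
  linear_combination (1/2) * ((x - 1) / 2) ^ t * ((x + 1) / 2) ^ (n-t) * h

lemma jacobi_B (α β : ℝ) (hα : 0 < α) (hβ : 0 < β) (n : ℕ) (x : ℝ) :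
    (1 - x) * (1 + x) * (jpoly α β n).derivative.eval x
      + (β * (1 - x) - α * (1 + x)) * jacobiP α β n x
      = - 2 * (n + 1) * jacobiP (α-1) (β-1) (n+1) x := by
  rw [jpoly_deriv_eval, jacobiP_eq_sum, jacobiP_eq_sum]
  have R : ((n:ℝ)+1) * ∑ s ∈ Finset.range (n + 1 + 1), jc (α - 1) (β - 1) (n + 1) s *
      (((x - 1) / 2) ^ s * ((x + 1) / 2) ^ (n + 1 - s)) =
      ∑ s ∈ Finset.range (n + 1), (((n:ℝ)+1-s) * jc (α-1) (β-1) (n+1) s *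
        (((x - 1) / 2) ^ s * ((x + 1) / 2) ^ (n + 1 - s)) +
        ((s:ℝ)+1) * jc (α-1) (β-1) (n+1) (s+1) *
        (((x - 1) / 2) ^ (s+1) * ((x + 1) / 2) ^ (n - s))) := by
    have : ((n:ℝ)+1) * ∑ s ∈ Finset.range (n + 1 + 1), jc (α - 1) (β - 1) (n + 1) s *
      (((x - 1) / 2) ^ s * ((x + 1) / 2) ^ (n + 1 - s)) =
      ∑ s ∈ Finset.range (n + 1 + 1), ((n:ℝ)+1-s) * jc (α-1) (β-1) (n+1) s *
        (((x - 1) / 2) ^ s * ((x + 1) / 2) ^ (n + 1 - s)) +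
      ∑ s ∈ Finset.range (n + 1 + 1), (s:ℝ) * jc (α-1) (β-1) (n+1) s *
        (((x - 1) / 2) ^ s * ((x + 1) / 2) ^ (n + 1 - s)) := by
      rw [Finset.mul_sum, ← Finset.sum_add_distrib]
      refine Finset.sum_congr rfl fun s _ => by ring
    rw [this, Finset.sum_range_succ, Finset.sum_range_succ' _ (n+1), Finset.sum_add_distrib]
    push_cast
    simp only [sub_self, zero_mul, add_zero]
  rw [mul_assoc (-2:ℝ), R, Finset.mul_sum, Finset.mul_sum, Finset.mul_sum, ← Finset.sum_add_distrib]
  refine Finset.sum_congr rfl fun s hs => ?_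
  have hs' : s ≤ n := by simpa [Nat.lt_succ_iff] using hs
  rw [jc_B1 α β hα hβ n s hs', jc_B2 α β hα hβ n s hs', show n + 1 - s = (n - s) + 1 by omega]
  have hc : (n:ℝ) - s = ((n-s:ℕ):ℝ) := by rw [Nat.cast_sub hs']
  rw [hc]
  generalize n - s = m
  have k1 : (s:ℝ) * ((x - 1) / 2) ^ (s-1) * ((x-1)/2) = s * ((x - 1) / 2) ^ s := by
    cases s with
    | zero => simp
    | succ s => simp only [Nat.add_sub_cancel]; ring
  have k2 : (m:ℝ) * ((x + 1) / 2) ^ (m-1) * ((x+1)/2) = m * ((x + 1) / 2) ^ m := by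
    cases m with
    | zero => simp
    | succ s => simp only [Nat.add_sub_cancel]; ring
  linear_combination (-2 * jc α β n s * ((x + 1) / 2) ^ m * ((x+1)/2)) * k1
    + (-2 * jc α β n s * ((x - 1) / 2) ^ s * ((x-1)/2)) * k2

lemma jacobiP_one (α β : ℝ) (hβ : -1 < β) (n : ℕ) :
    jacobiP α β n 1 = Real.Gamma (n + α + 1) / (Real.Gamma (α + 1) * n.factorial) := by
  rw [jacobiP_eq_sum, Finset.sum_range_succ', Finset.sum_eq_zero]
  · have : Real.Gamma (n + β + 1) ≠ 0 :=
      (Real.Gamma_pos_of_pos (by have : (0:ℝ) ≤ n := Nat.cast_nonneg n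
                                 linarith)).ne'
    simp [jc, this]
  · intro s _
    simp

lemma jacobiP_neg (α β : ℝ) (n : ℕ) (x : ℝ) :
    jacobiP α β n (-x) = (-1)^n * jacobiP β α n x := by
  rw [jacobiP_eq_sum, jacobiP_eq_sum, ← Finset.sum_range_reflect, Finset.mul_sum]
  refine Finset.sum_congr rfl fun s hs => ?_
  have hs' : s ≤ n := by simpa [Nat.lt_succ_iff] using hs
  obtain ⟨m, rfl⟩ := Nat.exists_eq_add_of_le hs'
  rw [show s + m + 1 - 1 - s = m by omega, show s + m - m = s by omega,
    show s + m - s = m by omega, show (-x-1)/2 = (-1) * ((x+1)/2) by ring,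
    show (-x+1)/2 = (-1) * ((x-1)/2) by ring, mul_pow, mul_pow]
  have : jc α β (s+m) m = jc β α (s+m) s := by
    unfold jc
    rw [show s + m - m = s by omega, show s + m - s = m by omega]
    push_cast
    rw [show (s:ℝ) + m + β - m + 1 = β + s + 1 by ring, show (s:ℝ) + m + α - s + 1 = α + m + 1 by ring]
    ring
  rw [this]
  ring

lemma jacobiP_zero (α β : ℝ) (hα : -1 < α) (hβ : -1 < β) (x : ℝ) : jacobiP α β 0 x = 1 := by
  have h1 : Real.Gamma (α + 1) ≠ 0 := (Real.Gamma_pos_of_pos (by linarith)).ne'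
  have h2 : Real.Gamma (β + 1) ≠ 0 := (Real.Gamma_pos_of_pos (by linarith)).ne'
  simp [jacobiP_eq_sum, jc, h1, h2]

/-- Jacobi weight. -/
noncomputable def jw (a b x : ℝ) : ℝ := (1 - x) ^ a * (1 + x) ^ b

lemma jw_int (a b : ℝ) (ha : -1 < a) (hb : -1 < b) : IntervalIntegrable (jw a b) volume (-1) 1 := by
  have h1 : IntervalIntegrable (jw a b) volume (-1) 0 := by
    have : IntervalIntegrable (fun x : ℝ => (1 + x) ^ b) volume (-1) 0 := by
      have := (intervalIntegral.intervalIntegrable_rpow' (a := 0) (b := 1) hb).comp_add_left 1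
      simpa using this
    refine this.continuousOn_mul (ContinuousOn.rpow_const (by fun_prop) ?_)
    intro x hx
    rw [Set.uIcc_of_le (by norm_num)] at hx
    left; linarith [hx.2]
  have h2 : IntervalIntegrable (jw a b) volume 0 1 := by
    have : IntervalIntegrable (fun x : ℝ => (1 - x) ^ a) volume 0 1 := by
      have := (intervalIntegral.intervalIntegrable_rpow' (a := 1) (b := 0) ha).comp_sub_left 1
      simpa using this
    refine this.mul_continuousOn (ContinuousOn.rpow_const (by fun_prop) ?_)
    intro x hx
    rw [Set.uIcc_of_le (by norm_num)] at hx
    left; linarith [hx.1]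
  exact h1.trans h2

lemma jw_int_mul (a b : ℝ) (ha : -1 < a) (hb : -1 < b) (f : ℝ → ℝ) (hf : Continuous f) :
    IntervalIntegrable (fun x => f x * jw a b x) volume (-1) 1 :=
  (jw_int a b ha hb).continuousOn_mul hf.continuousOn

lemma jw_integral (a b : ℝ) (ha : -1 < a) (hb : -1 < b) :
    ∫ x in (-1:ℝ)..1, jw a b x = 2 ^ (a + b + 1) * Real.Gamma (a+1) * Real.Gamma (b+1) / Real.Gamma (a+b+2) := by
  have h := Complex.betaIntegral_scaled ((a+1 : ℝ) : ℂ) ((b+1 : ℝ):ℂ) (a := 2) (by norm_num)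
  rw [Complex.betaIntegral_eq_Gamma_mul_div _ _ (by rw [Complex.ofReal_re]; linarith) (by rw [Complex.ofReal_re]; linarith)] at h
  have e1 : ∫ x in (0:ℝ)..2, (x : ℂ) ^ (((a+1 : ℝ) : ℂ) - 1) * (((2:ℝ) : ℂ) - x) ^ (((b+1 : ℝ):ℂ) - 1)
      = ∫ x in (0:ℝ)..2, ((x ^ a * (2 - x) ^ b : ℝ) : ℂ) := by
    refine intervalIntegral.integral_congr fun x hx => ?_
    rw [Set.uIcc_of_le (by norm_num)] at hx
    rw [Complex.ofReal_mul, Complex.ofReal_cpow hx.1, Complex.ofReal_cpow (by linarith [hx.2])]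
    push_cast
    simp
  rw [e1, intervalIntegral.integral_ofReal] at h
  have e2 : ((2:ℝ):ℂ) ^ (((a+1 : ℝ) : ℂ) + ((b+1 : ℝ):ℂ) - 1) = (((2:ℝ) ^ (a+b+1) : ℝ) : ℂ) := by
    rw [Complex.ofReal_cpow (by norm_num)]
    push_cast
    congr 1
    ring
  rw [e2, ← Complex.ofReal_add, Complex.Gamma_ofReal, Complex.Gamma_ofReal, Complex.Gamma_ofReal,
    ← Complex.ofReal_mul, ← Complex.ofReal_div, ← Complex.ofReal_mul, Complex.ofReal_inj] at h
  have e3 := intervalIntegral.integral_comp_sub_left (a := -1) (b := 1) (fun x : ℝ => x ^ a * (2 - x) ^ b) 1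
  have e4 : ∫ x in (-1:ℝ)..1, jw a b x = ∫ x in (-1:ℝ)..1, (1 - x) ^ a * (2 - (1 - x)) ^ b := by
    refine intervalIntegral.integral_congr fun x _ => ?_
    simp only [jw]
    rw [show 2 - (1 - x) = 1 + x by ring]
  rw [e4, e3, show (1:ℝ) - 1 = 0 by ring, show (1:ℝ) - -1 = 2 by ring, h,
    show a + 1 + (b + 1) = a + b + 2 by ring]
  ring

lemma jw_hasDerivAt (a b x : ℝ) (hx : x ∈ Set.Ioo (-1:ℝ) 1) :
    HasDerivAt (jw a b) ((b * (1 - x) - a * (1 + x)) * jw (a-1) (b-1) x) x := by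
  have p1 : 0 < 1 - x := by linarith [hx.2]
  have p2 : 0 < 1 + x := by linarith [hx.1]
  have h1 : HasDerivAt (fun x : ℝ => (1 - x) ^ a) (-1 * a * (1-x)^(a-1)) x :=
    (((hasDerivAt_id x).const_sub 1).rpow_const (Or.inl p1.ne'))
  have h2 : HasDerivAt (fun x : ℝ => (1 + x) ^ b) (1 * b * (1+x)^(b-1)) x :=
    (((hasDerivAt_id x).const_add 1).rpow_const (Or.inl p2.ne'))
  have h := h1.mul h2
  refine h.congr_deriv ?_
  simp only [jw]
  have q1 : (1 - x) ^ a = (1-x)^(a-1) * (1-x) := by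
    rw [← Real.rpow_add_one p1.ne']; congr 1; ring
  have q2 : (1 + x) ^ b = (1+x)^(b-1) * (1+x) := by
    rw [← Real.rpow_add_one p2.ne']; congr 1; ring
  rw [q1, q2]
  ring

lemma jw_succ (a b x : ℝ) (hx : x ∈ Set.Ioo (-1:ℝ) 1) :
    jw a b x = (1 - x) * (1 + x) * jw (a-1) (b-1) x := by
  have p1 : 0 < 1 - x := by linarith [hx.2]
  have p2 : 0 < 1 + x := by linarith [hx.1]
  simp only [jw]
  have q1 : (1 - x) ^ a = (1-x)^(a-1) * (1-x) := by
    rw [← Real.rpow_add_one p1.ne']; congr 1; ring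
  have q2 : (1 + x) ^ b = (1+x)^(b-1) * (1+x) := by
    rw [← Real.rpow_add_one p2.ne']; congr 1; ring
  rw [q1, q2]
  ring

lemma jw_left (a b x : ℝ) (hx : x ∈ Set.Ioo (-1:ℝ) 1) : jw (a+1) b x = (1 - x) * jw a b x := by
  have p1 : 0 < 1 - x := by linarith [hx.2]
  simp only [jw]
  rw [Real.rpow_add_one p1.ne']; ring

lemma jw_right (a b x : ℝ) (hx : x ∈ Set.Ioo (-1:ℝ) 1) : jw a (b+1) x = (1 + x) * jw a b x := by
  have p1 : 0 < 1 + x := by linarith [hx.1]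
  simp only [jw]
  rw [Real.rpow_add_one p1.ne']; ring

lemma jw_left_pow (a b x : ℝ) (j : ℕ) (hx : x ∈ Set.Ioo (-1:ℝ) 1) :
    jw (a+j) b x = (1 - x)^j * jw a b x := by
  have p1 : 0 < 1 - x := by linarith [hx.2]
  simp only [jw]
  rw [Real.rpow_add_natCast p1.ne']; ring

lemma integral_congr_Ioo' {f g : ℝ → ℝ} (h : ∀ x ∈ Set.Ioo (-1:ℝ) 1, f x = g x) :
    ∫ x in (-1:ℝ)..1, f x = ∫ x in (-1:ℝ)..1, g x := by
  rw [intervalIntegral.integral_of_le (by norm_num), intervalIntegral.integral_of_le (by norm_num),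
    integral_Ioc_eq_integral_Ioo, integral_Ioc_eq_integral_Ioo]
  exact setIntegral_congr_fun measurableSet_Ioo h

lemma jacobiP_cont (α β : ℝ) (n : ℕ) : Continuous (jacobiP α β n) := by
  have : jacobiP α β n = fun x => (jpoly α β n).eval x := by
    funext x; rw [jpoly_eval]
  rw [this]
  exact (jpoly α β n).continuous

lemma jM_step (n : ℕ) (α β a : ℝ) (hα : -1 < α) (hβ : -1 < β) (ha : 0 < a) :
    2 * ((n:ℝ)+1) * ∫ x in (-1:ℝ)..1, jacobiP α β (n+1) x * jw (a-1) β x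
      = (α + 1 - a) * ∫ x in (-1:ℝ)..1, jacobiP (α+1) (β+1) n x * jw (a-1) (β+1) x := by
  have hP := jacobiP_cont α β (n+1)
  have hQ := jacobiP_cont (α+1) (β+1) n
  have i1 := jw_int_mul (a-1) β (by linarith) hβ _ hP
  have i2 := jw_int_mul (a-1) (β+1) (by linarith) (by linarith) _ hQ
  have key := intervalIntegral.integral_eq_sub_of_hasDerivAt_of_le (a := -1) (b := 1)
    (f := fun x => (jpoly (α+1) (β+1) n).eval x * jw a (β+1) x)
    (f' := fun x => (-2 * ((n:ℝ)+1)) * (jacobiP α β (n+1) x * jw (a-1) β x)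
      + (α+1-a) * (jacobiP (α+1) (β+1) n x * jw (a-1) (β+1) x))
    (by norm_num) ?_ ?_ ?_
  · rw [intervalIntegral.integral_add (i1.const_mul _) (i2.const_mul _),
      intervalIntegral.integral_const_mul, intervalIntegral.integral_const_mul] at key
    have z1 : jw a (β+1) 1 = 0 := by
      simp [jw, Real.zero_rpow ha.ne']
    have z2 : jw a (β+1) (-1) = 0 := by
      simp [jw, Real.zero_rpow (show β + 1 ≠ 0 by linarith)]
    rw [z1, z2] at key
    linarith
  · refine (Polynomial.continuous _).continuousOn.mul (ContinuousOn.mul ?_ ?_)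
    · exact ContinuousOn.rpow_const (by fun_prop) fun x hx => Or.inr ha.le
    · exact ContinuousOn.rpow_const (by fun_prop) fun x hx => Or.inr (by linarith)
  · intro x hx
    have h := ((jpoly (α+1) (β+1) n).hasDerivAt x).mul (jw_hasDerivAt a (β+1) x hx)
    refine h.congr_deriv ?_
    have hB := jacobi_B (α+1) (β+1) (by linarith) (by linarith) n x
    have e1 := jw_succ a (β+1) x hx
    have e2 := jw_right (a-1) β x hx
    rw [add_sub_cancel_right] at e1 hB ⊢
    rw [add_sub_cancel_right] at hB
    rw [e1, e2, jpoly_eval]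
    linear_combination jw (a-1) β x * hB
  · exact (i1.const_mul _).add (i2.const_mul _)

lemma jM (n : ℕ) : ∀ (α β a : ℝ) (_ : -1 < α) (_ : -1 < β) (_ : 0 < a),
    ∫ x in (-1:ℝ)..1, jacobiP α β n x * jw (a-1) β x
      = (∏ i ∈ Finset.range n, (α + 1 - a + i)) / n.factorial * 2 ^ (a + β) * Real.Gamma a *
        Real.Gamma (β + n + 1) / Real.Gamma (a + β + n + 1) := by
  induction n with
  | zero =>
    intro α β a hα hβ ha
    have := jw_integral (a-1) β (by linarith) hβ
    simp only [jacobiP_zero α β hα hβ, one_mul, this]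
    rw [show a - 1 + β + 1 = a + β by ring, show a - 1 + 1 = a by ring,
      show a - 1 + β + 2 = a + β + 1 by ring]
    simp
  | succ n ih =>
    intro α β a hα hβ ha
    have h := jM_step n α β a hα hβ ha
    rw [ih (α+1) (β+1) a (by linarith) (by linarith) ha] at h
    have hn : (n:ℝ) + 1 ≠ 0 := by positivity
    have : ∏ i ∈ Finset.range (n+1), (α + 1 - a + i) =
        (∏ i ∈ Finset.range n, (α + 1 + 1 - a + i)) * (α + 1 - a) := by
      rw [Finset.prod_range_succ']
      push_cast
      congr 1
      · refine Finset.prod_congr rfl fun i _ => by ring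
      · ring
    rw [this, Nat.factorial_succ]
    rw [← mul_right_inj' (show 2 * ((n:ℝ)+1) ≠ 0 by positivity), h]
    push_cast
    rw [show a + (β + 1) = a + β + 1 by ring, Real.rpow_add_one (by norm_num),
      show β + 1 + n + 1 = β + (n + 1) + 1 by ring,
      show a + β + 1 + n + 1 = a + β + (n + 1) + 1 by ring]
    field_simp

lemma jM_zero (n j : ℕ) (α β : ℝ) (hα : -1 < α) (hβ : -1 < β) (hj : j < n) :
    ∫ x in (-1:ℝ)..1, jacobiP α β n x * jw (α + j) β x = 0 := by
  have h := jM n α β (α + 1 + j) hα hβ (by have : (0:ℝ) ≤ j := Nat.cast_nonneg j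
                                           linarith)
  rw [show α + 1 + (j:ℝ) - 1 = α + j by ring] at h
  rw [h, Finset.prod_eq_zero (Finset.mem_range.2 hj) (by ring)]
  simp

lemma jM_one (n : ℕ) (α β : ℝ) (hα : 0 < α) (hβ : -1 < β) :
    ∫ x in (-1:ℝ)..1, jacobiP α β n x * jw (α - 1) β x =
      2 ^ (α + β) * Real.Gamma α * Real.Gamma (β + n + 1) / Real.Gamma (α + β + n + 1) := by
  rw [jM n α β α (by linarith) hβ hα]
  have : ∏ i ∈ Finset.range n, (α + 1 - α + (i:ℝ)) = n.factorial := by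
    rw [← Finset.prod_range_add_one_eq_factorial]
    push_cast
    refine Finset.prod_congr rfl fun i _ => by ring
  rw [this, div_self (by positivity), one_mul]

lemma poly_expand (q : Polynomial ℝ) (m : ℕ) (hq : q.natDegree < m) :
    ∃ c : ℕ → ℝ, ∀ x, q.eval x = ∑ j ∈ Finset.range m, c j * (1 - x)^j := by
  refine ⟨fun j => (q.comp (1 - Polynomial.X)).coeff j, fun x => ?_⟩
  have hd : (q.comp (1 - Polynomial.X)).natDegree < m := by
    refine lt_of_le_of_lt ?_ hq
    refine Polynomial.natDegree_comp_le.trans ?_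
    have : (1 - Polynomial.X : Polynomial ℝ).natDegree ≤ 1 := by compute_degree
    nlinarith
  have := Polynomial.eval_eq_sum_range' hd (1 - x)
  rw [← this]
  simp [Polynomial.eval_comp]

lemma jorth (n : ℕ) (α β : ℝ) (hα : -1 < α) (hβ : -1 < β) (q : Polynomial ℝ) (hq : q.natDegree < n) :
    ∫ x in (-1:ℝ)..1, q.eval x * jacobiP α β n x * jw α β x = 0 := by
  obtain ⟨c, hc⟩ := poly_expand q n hq
  have : ∫ x in (-1:ℝ)..1, q.eval x * jacobiP α β n x * jw α β x
      = ∫ x in (-1:ℝ)..1, ∑ j ∈ Finset.range n, c j * (jacobiP α β n x * jw (α + j) β x) := by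
    refine integral_congr_Ioo' fun x hx => ?_
    rw [hc, Finset.sum_mul, Finset.sum_mul]
    refine Finset.sum_congr rfl fun j _ => ?_
    rw [jw_left_pow _ _ _ _ hx]; ring
  rw [this, intervalIntegral.integral_finsetSum]
  · refine Finset.sum_eq_zero fun j hj => ?_
    rw [intervalIntegral.integral_const_mul, jM_zero n j α β hα hβ (Finset.mem_range.1 hj), mul_zero]
  · intro j _
    have : (0:ℝ) ≤ j := Nat.cast_nonneg j
    exact (jw_int_mul _ _ (by linarith) hβ _ (jacobiP_cont α β n)).const_mul _

lemma jJ (n : ℕ) (α β : ℝ) (hα : 0 < α) (hβ : -1 < β) :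
    ∫ x in (-1:ℝ)..1, jacobiP α β n x ^ 2 * jw (α - 1) β x =
      2 ^ (α + β) * Real.Gamma (n + α + 1) * Real.Gamma (n + β + 1) /
        (α * n.factorial * Real.Gamma (n + α + β + 1)) := by
  obtain ⟨c, hc⟩ := poly_expand (jpoly α β n) (n+1) (by have := jpoly_natDegree α β n; omega)
  simp only [jpoly_eval] at hc
  have : ∫ x in (-1:ℝ)..1, jacobiP α β n x ^ 2 * jw (α - 1) β x
      = ∫ x in (-1:ℝ)..1, ∑ j ∈ Finset.range (n+1), c j * (jacobiP α β n x * jw (α - 1 + j) β x) := by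
    refine integral_congr_Ioo' fun x hx => ?_
    rw [pow_two]
    nth_rewrite 1 [hc]
    rw [Finset.sum_mul, Finset.sum_mul]
    refine Finset.sum_congr rfl fun j _ => ?_
    rw [jw_left_pow _ _ _ _ hx]; ring
  have hc0 : c 0 = jacobiP α β n 1 := by
    rw [hc, Finset.sum_range_succ', Finset.sum_eq_zero]
    · simp
    · intro j _; simp
  rw [this, intervalIntegral.integral_finsetSum]
  · rw [Finset.sum_range_succ', Finset.sum_eq_zero]
    · rw [intervalIntegral.integral_const_mul, Nat.cast_zero, add_zero, jM_one n α β hα hβ, hc0,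
        jacobiP_one α β hβ, Real.Gamma_add_one hα.ne', show β + (n:ℝ) + 1 = n + β + 1 by ring,
        show α + β + n + 1 = n + α + β + 1 by ring]
      have := (Real.Gamma_pos_of_pos hα).ne'
      field_simp
      ring
    · intro j hj
      rw [intervalIntegral.integral_const_mul]
      push_cast
      rw [show α - 1 + ((j:ℝ) + 1) = α + j by ring,
        jM_zero n j α β (by linarith) hβ (Finset.mem_range.1 hj), mul_zero]
  · intro j _
    have : (0:ℝ) ≤ j := Nat.cast_nonneg j
    exact (jw_int_mul _ _ (by linarith) hβ _ (jacobiP_cont α β n)).const_mul _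

lemma jJ' (n : ℕ) (α β : ℝ) (hα : -1 < α) (hβ : 0 < β) :
    ∫ x in (-1:ℝ)..1, jacobiP α β n x ^ 2 * jw α (β - 1) x =
      2 ^ (α + β) * Real.Gamma (n + α + 1) * Real.Gamma (n + β + 1) /
        (β * n.factorial * Real.Gamma (n + α + β + 1)) := by
  have h := jJ n β α hβ hα
  have e := intervalIntegral.integral_comp_neg (a := -1) (b := 1)
    (fun x => jacobiP β α n x ^ 2 * jw (β - 1) α x)
  rw [neg_neg] at e
  rw [← e] at h
  have : ∫ x in (-1:ℝ)..1, jacobiP α β n x ^ 2 * jw α (β - 1) x =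
      ∫ x in (-1:ℝ)..1, jacobiP β α n (-x) ^ 2 * jw (β - 1) α (-x) := by
    refine integral_congr_Ioo' fun x hx => ?_
    rw [jacobiP_neg, mul_pow, ← pow_mul, mul_comm n 2, pow_mul]
    simp only [jw, sub_neg_eq_add]
    rw [← sub_eq_add_neg]
    ring
  rw [this, h, add_comm β α, show n + β + α + 1 = n + α + β + 1 by ring]
  ring

lemma jI (n : ℕ) (α β : ℝ) (hα : 0 < α) (hβ : 0 < β) :
    ∫ x in (-1:ℝ)..1, jacobiP α β n x ^ 2 * jw (α - 1) (β - 1) x =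
      2 ^ (α + β) * Real.Gamma (n + α + 1) * Real.Gamma (n + β + 1) /
        (n.factorial * Real.Gamma (n + α + β + 1)) * ((1/α + 1/β)/2) := by
  have h1 := jJ n α β hα (by linarith)
  have h2 := jJ' n α β (by linarith) hβ
  have hc : Continuous fun x => jacobiP α β n x ^ 2 := (jacobiP_cont α β n).pow 2
  have i1 := jw_int_mul (α-1) β (by linarith) (by linarith) _ hc
  have i2 := jw_int_mul α (β-1) (by linarith) (by linarith) _ hc
  have : ∫ x in (-1:ℝ)..1, jacobiP α β n x ^ 2 * jw (α - 1) (β - 1) x =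
      ∫ x in (-1:ℝ)..1, ((1/2) * (jacobiP α β n x ^ 2 * jw (α - 1) β x)
        + (1/2) * (jacobiP α β n x ^ 2 * jw α (β - 1) x)) := by
    refine integral_congr_Ioo' fun x hx => ?_
    have e1 := jw_left (α-1) (β-1) x hx
    have e2 := jw_right (α-1) (β-1) x hx
    rw [sub_add_cancel] at e1 e2
    rw [e1, e2]; ring
  rw [this, intervalIntegral.integral_add (i1.const_mul _) (i2.const_mul _),
      intervalIntegral.integral_const_mul, intervalIntegral.integral_const_mul, h1, h2]
  have hn : (0:ℝ) ≤ n := Nat.cast_nonneg n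
  have g : Real.Gamma (n + α + β + 1) ≠ 0 := (Real.Gamma_pos_of_pos (by linarith)).ne'
  field_simp

lemma jT1 (n : ℕ) (α β : ℝ) (hα : 1 < α) (hβ : 1 < β) :
    ∫ x in (-1:ℝ)..1, (jpoly α β n).derivative.eval x ^ 2 * jw α β x =
      2 ^ (α + β) * Real.Gamma (n + α + 1) * Real.Gamma (n + β + 1) * n * (n + α + β + 1) /
        (n.factorial * Real.Gamma (n + α + β + 1)) * ((1/(α+1) + 1/(β+1))/2) := by
  cases n with
  | zero =>
    have : ∀ x, (jpoly α β 0).derivative.eval x = 0 := by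
      intro x; rw [jpoly_deriv_eval]; simp
    simp [this]
  | succ m =>
    have h := jI m (α+1) (β+1) (by linarith) (by linarith)
    rw [add_sub_cancel_right, add_sub_cancel_right] at h
    simp only [jacobi_A α β (by linarith) (by linarith) m, mul_pow, mul_assoc]
    rw [intervalIntegral.integral_const_mul, h]
    have hm : (0:ℝ) ≤ m := Nat.cast_nonneg m
    have G : Real.Gamma (m + 1 + α + β + 1 + 1) = (m + 1 + α + β + 1) * Real.Gamma (m + 1 + α + β + 1) :=
      Real.Gamma_add_one (by linarith)
    have g : Real.Gamma (m + 1 + α + β + 1) ≠ 0 := (Real.Gamma_pos_of_pos (by linarith)).ne'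
    rw [Nat.factorial_succ]
    push_cast
    rw [show α + 1 + (β + 1) = α + β + 1 + 1 by ring, Real.rpow_add_one (by norm_num),
      Real.rpow_add_one (by norm_num), show (m:ℝ) + (α+1) + (β + 1) + 1 = m + 1 + α + β + 1 + 1 by ring, G,
      show (m:ℝ) + (α + 1) + 1 = m + 1 + α + 1 by ring, show (m:ℝ) + (β + 1) + 1 = m + 1 + β + 1 by ring]
    have k1 : (m:ℝ) + 1 + α + β + 1 ≠ 0 := by linarith
    have k2 : α + 1 ≠ 0 := by linarith
    have k3 : β + 1 ≠ 0 := by linarith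
    have k4 : (m:ℝ) + 1 ≠ 0 := by linarith
    field_simp

lemma jT3 (n : ℕ) (α β : ℝ) (hα : 1 < α) (hβ : 1 < β) :
    ∫ x in (-1:ℝ)..1, jacobiP (α-1) (β-1) (n+1) x ^ 2 * jw (α-1-1) (β-1-1) x =
      2 ^ (α + β) / 4 * Real.Gamma (n + α + 1) * Real.Gamma (n + β + 1) * (n + α + β) /
        ((n + 1) * n.factorial * Real.Gamma (n + α + β + 1)) * ((1/(α-1) + 1/(β-1))/2) := by
  rw [jI (n+1) (α-1) (β-1) (by linarith) (by linarith)]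
  have hm : (0:ℝ) ≤ n := Nat.cast_nonneg n
  have G : Real.Gamma (n + α + β + 1) = (n + α + β) * Real.Gamma (n + α + β) :=
    Real.Gamma_add_one (by linarith)
  have g : Real.Gamma (n + α + β) ≠ 0 := (Real.Gamma_pos_of_pos (by linarith)).ne'
  have t : (2:ℝ) ^ (α + β) = 2 ^ (α - 1 + (β - 1)) * 4 := by
    rw [show α + β = α - 1 + (β - 1) + 1 + 1 by ring, Real.rpow_add_one (by norm_num),
      Real.rpow_add_one (by norm_num)]
    ring
  rw [Nat.factorial_succ, t]
  push_cast
  rw [G, show (n:ℝ) + 1 + (α - 1) + (β - 1) + 1 = n + α + β by ring,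
    show (n:ℝ) + 1 + (α - 1) + 1 = n + α + 1 by ring, show (n:ℝ) + 1 + (β - 1) + 1 = n + β + 1 by ring]
  have k1 : (n:ℝ) + α + β ≠ 0 := by linarith
  have k2 : α - 1 ≠ 0 := by linarith
  have k3 : β - 1 ≠ 0 := by linarith
  have k4 : (n:ℝ) + 1 ≠ 0 := by linarith
  field_simp

lemma jacobi_ae (n : ℕ) (α β : ℝ) (hα : 1 < α) :
    (hβ : 1 < β) → ∀ᵐ x : ℝ, jacobiP α β n x ≠ 0 := by
  intro hβ
  have hne : jpoly α β n ≠ 0 := by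
    intro h0
    have h1 := jpoly_eval α β n 1
    rw [h0, jacobiP_one α β (by linarith)] at h1
    have hn : (0:ℝ) ≤ n := Nat.cast_nonneg n
    have g1 : 0 < Real.Gamma (n + α + 1) := Real.Gamma_pos_of_pos (by linarith)
    have g2 : 0 < Real.Gamma (α + 1) := Real.Gamma_pos_of_pos (by linarith)
    have : 0 < Real.Gamma (n + α + 1) / (Real.Gamma (α + 1) * n.factorial) := by positivity
    rw [← h1] at this
    simp at this
  have hfin : (((jpoly α β n).roots.toFinset : Finset ℝ) : Set ℝ).Finite := Finset.finite_toSet _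
  have := compl_mem_ae_iff.2 (hfin.measure_zero volume)
  filter_upwards [this] with x hx h0
  apply hx
  simp [hne, Polynomial.IsRoot, jpoly_eval, h0]

lemma fisher_pointwise (n : ℕ) (α β : ℝ) (hα : 1 < α) (hβ : 1 < β) (x : ℝ)
    (hx : x ∈ Set.Ioo (-1:ℝ) 1) (hP : jacobiP α β n x ≠ 0) (hh : jacobih α β n ≠ 0) :
    (deriv (jacobiρ α β n) x) ^ 2 / jacobiρ α β n x =
      1 / jacobih α β n * ((jpoly α β n).derivative.eval x ^ 2 * jw α β x)
      + -(4 * (n+1)) / jacobih α β n *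
        ((jpoly α β n).derivative.eval x * jacobiP (α-1) (β-1) (n+1) x * jw (α-1) (β-1) x)
      + 4 * (n+1)^2 / jacobih α β n *
        (jacobiP (α-1) (β-1) (n+1) x ^ 2 * jw (α-1-1) (β-1-1) x) := by
  have p1 : 0 < 1 - x := by linarith [hx.2]
  have p2 : 0 < 1 + x := by linarith [hx.1]
  have e0 : jacobiρ α β n = fun x => (jpoly α β n).eval x ^ 2 * jw α β x / jacobih α β n := by
    funext y
    rw [jpoly_eval]; unfold jacobiρ jw; ring
  have hd := ((((jpoly α β n).hasDerivAt x).fun_pow 2).fun_mul (jw_hasDerivAt α β x hx)).div_const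
    (jacobih α β n)
  rw [← e0] at hd
  rw [hd.deriv, e0]
  have hB := jacobi_B α β (by linarith) (by linarith) n x
  have s1 := jw_succ α β x hx
  have s2 := jw_succ (α-1) (β-1) x hx
  have hw : jw (α-1-1) (β-1-1) x ≠ 0 := by
    unfold jw; positivity
  have hR : jacobiP (α-1) (β-1) (n+1) x = -((1 - x) * (1 + x) * (jpoly α β n).derivative.eval x
      + (β * (1 - x) - α * (1 + x)) * jacobiP α β n x) / (2 * (n+1)) := by
    rw [hB]; field_simp
  have hn : (n:ℝ) + 1 ≠ 0 := by positivity
  rw [hR]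
  simp only [jpoly_eval, s1, s2]
  have p1' := p1.ne'
  have p2' := p2.ne'
  generalize jw (α-1-1) (β-1-1) x = w at *
  generalize jacobiP α β n x = P at *
  generalize (jpoly α β n).derivative.eval x = D at *
  generalize jacobih α β n = h at *
  field_simp
  ring

/-- For every `n ∈ ℕ` and reals `α > 1`, `β > 1`, the Fisher information
of the Rakhmanov density of the orthonormal Jacobi polynomial equals the stated
expression. -/
theorem jacobi_fisher (n : ℕ) (α β : ℝ) (hα : 1 < α) (hβ : 1 < β) :
    (∫ x in Set.Ioo (-1 : ℝ) 1, (deriv (jacobiρ α β n) x) ^ 2 / jacobiρ α β n x) =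
      (2 * (n : ℝ) + α + β + 1) / (4 * ((n : ℝ) + α + β - 1)) *
        ((n : ℝ) * ((n : ℝ) + α + β - 1) *
            (((n : ℝ) + α) / (β + 1) + 2 + ((n : ℝ) + β) / (α + 1)) +
         ((n : ℝ) + 1) * ((n : ℝ) + α + β) *
            (((n : ℝ) + α) / (β - 1) + 2 + ((n : ℝ) + β) / (α - 1))) := by
  have hn : (0:ℝ) ≤ n := Nat.cast_nonneg n
  have g1 : 0 < Real.Gamma (n + α + 1) := Real.Gamma_pos_of_pos (by linarith)
  have g2 : 0 < Real.Gamma (n + β + 1) := Real.Gamma_pos_of_pos (by linarith)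
  have g3 : 0 < Real.Gamma (n + α + β + 1) := Real.Gamma_pos_of_pos (by linarith)
  have hpos : 0 < 2 * (n:ℝ) + α + β + 1 := by linarith
  have ht : (0:ℝ) < 2 ^ (α + β) := Real.rpow_pos_of_pos (by norm_num) _
  have ht1 : (2:ℝ) ^ (α + β + 1) = 2 ^ (α + β) * 2 := Real.rpow_add_one (by norm_num) _
  have hh : jacobih α β n ≠ 0 := by
    unfold jacobih
    rw [ht1]
    positivity
  have cD : Continuous fun x => (jpoly α β n).derivative.eval x := Polynomial.continuous _
  have cR := jacobiP_cont (α-1) (β-1) (n+1)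
  have i1 := jw_int_mul α β (by linarith) (by linarith) _ (cD.fun_pow 2)
  have i2 := jw_int_mul (α-1) (β-1) (by linarith) (by linarith) _ (cD.fun_mul cR)
  have i3 := jw_int_mul (α-1-1) (β-1-1) (by linarith) (by linarith) _ (cR.fun_pow 2)
  have o := jorth (n+1) (α-1) (β-1) (by linarith) (by linarith) (jpoly α β n).derivative (by
    have h1 := Polynomial.natDegree_derivative_le (jpoly α β n)
    have h2 := jpoly_natDegree α β n
    omega)
  have key : (∫ x in Set.Ioo (-1 : ℝ) 1, (deriv (jacobiρ α β n) x) ^ 2 / jacobiρ α β n x) =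
      ∫ x in Set.Ioo (-1 : ℝ) 1, (1 / jacobih α β n * ((jpoly α β n).derivative.eval x ^ 2 * jw α β x)
      + -(4 * (n+1)) / jacobih α β n *
        ((jpoly α β n).derivative.eval x * jacobiP (α-1) (β-1) (n+1) x * jw (α-1) (β-1) x)
      + 4 * (n+1)^2 / jacobih α β n *
        (jacobiP (α-1) (β-1) (n+1) x ^ 2 * jw (α-1-1) (β-1-1) x)) := by
    refine setIntegral_congr_ae measurableSet_Ioo ?_
    filter_upwards [jacobi_ae n α β hα hβ] with x hP hx
    exact fisher_pointwise n α β hα hβ x hx hP hh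
  rw [key, ← integral_Ioc_eq_integral_Ioo, ← intervalIntegral.integral_of_le (by norm_num),
    intervalIntegral.integral_add ((i1.const_mul _).add (i2.const_mul _)) (i3.const_mul _),
    intervalIntegral.integral_add (i1.const_mul _) (i2.const_mul _),
    intervalIntegral.integral_const_mul, intervalIntegral.integral_const_mul,
    intervalIntegral.integral_const_mul, o, jT1 n α β hα hβ, jT3 n α β hα hβ]
  unfold jacobih
  rw [ht1]
  have k1 : (n:ℝ) + α + β - 1 ≠ 0 := by linarith
  have k2 : α - 1 ≠ 0 := by linarith
  have k3 : β - 1 ≠ 0 := by linarith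
  have k4 : (n:ℝ) + 1 ≠ 0 := by linarith
  have k5 : α + 1 ≠ 0 := by linarith
  have k6 : β + 1 ≠ 0 := by linarith
  have k7 : (n.factorial : ℝ) ≠ 0 := by positivity
  field_simp
  ring
end

section
/- Let y_n(x) = Σ_{t=0}^{n} c_t x^t be a polynomial of degree at most n with real coefficients, and set c_i = 0 for i > n. Then for every positive integer p, [y_n(x)]^p = Σ_{t=0}^{np} ( p!/(t+p)! ) · B_{t+p,p}(c_0, 2! c_1, …, (t+1)! c_t) · x^t, where B_{m,l} denotes the partial Bell polynomial. -/
open MeasureTheory Real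

/-- The partial Bell polynomial `B_{m,l}(c_1, c_2, …, c_{m−l+1})`: the sum over all tuples
`(j_1, …, j_{m−l+1})` of nonnegative integers with `j_1 + ⋯ + j_{m−l+1} = l` and
`j_1 + 2j_2 + ⋯ + (m−l+1)j_{m−l+1} = m` of
`m!/(j_1!⋯j_{m−l+1}!) · ∏_k (c_k/k!)^{j_k}`. Here the arguments are given as a function
`c : ℕ → ℝ`, where `c k` is the `k`-th argument `c_k` (for `1 ≤ k ≤ m − l + 1`). -/
noncomputable def bellB (m l : ℕ) (c : ℕ → ℝ) : ℝ :=
  ∑ j ∈ (Fintype.piFinset fun _ : Fin (m - l + 1) => Finset.range (m + 1)) |>.filter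
      (fun j => (∑ i, j i) = l ∧ (∑ i, (i.1 + 1) * j i) = m),
    (m.factorial : ℝ) / (∏ i, ((j i).factorial : ℝ)) *
      ∏ i, (c (i.1 + 1) / ((i.1 + 1).factorial : ℝ)) ^ (j i)

theorem bell_aux (n p t N : ℕ) (c : ℕ → ℝ) (ht : t ≤ N) :
    (p.factorial : ℝ) / ((t + p).factorial : ℝ) *
          bellB (t + p) p (fun k => (k.factorial : ℝ) * c (k - 1)) =
    ∑ k ∈ (Finset.piAntidiag (Finset.range (N+1)) p).filter
      (fun k => ∑ i ∈ Finset.range (N+1), i * k i = t),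
      (Nat.multinomial (Finset.range (N+1)) k : ℝ) * ∏ i ∈ Finset.range (N+1), c i ^ k i := by
  unfold bellB
  have hK : t + p - p + 1 = t + 1 := by omega
  generalize t + p - p + 1 = K at hK
  subst hK
  rw [Finset.mul_sum]
  have hsub : Finset.range (t+1) ⊆ Finset.range (N+1) := by
    intro i; simp only [Finset.mem_range]; omega
  have key : ∀ (k : ℕ → ℕ), (∑ i ∈ Finset.range (N+1), i * k i = t) →
      ∀ i ∈ Finset.range (N+1), i ∉ Finset.range (t+1) → k i = 0 := by
    intro k hk i hi hit
    by_contra h0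
    have h1 : i * k i ≤ ∑ i ∈ Finset.range (N+1), i * k i :=
      Finset.single_le_sum (f := fun i => i * k i) (fun _ _ => Nat.zero_le _) hi
    have h2 : i ≤ i * k i := Nat.le_mul_of_pos_right _ (by omega)
    simp only [Finset.mem_range] at hit
    omega
  refine Finset.sum_bij' (fun j _ => fun k => if h : k < t + 1 then j ⟨k, h⟩ else 0)
    (fun k _ => fun i => k i.1) ?_ ?_ ?_ ?_ ?_
  · intro j hj
    simp only [Finset.mem_filter, Fintype.mem_piFinset, Finset.mem_range] at hj
    obtain ⟨-, h1, h2⟩ := hj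
    have h3 : ∑ i : Fin (t+1), i.1 * j i = t := by
      simp only [add_mul, one_mul, Finset.sum_add_distrib, h1] at h2
      omega
    simp only [Finset.mem_filter, Finset.mem_piAntidiag]
    refine ⟨⟨?_, ?_⟩, ?_⟩
    · rw [← Finset.sum_subset hsub, Finset.sum_range]
      · simpa only [Fin.is_lt, dite_true, Fin.eta] using h1
      · intro i _ hi
        simp only [Finset.mem_range] at hi
        simp [hi]
    · intro i hi
      simp only [Finset.mem_range]
      by_contra hh
      exact hi (dif_neg (by omega))
    · rw [← Finset.sum_subset hsub, Finset.sum_range]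
      · simpa only [Fin.is_lt, dite_true, Fin.eta] using h3
      · intro i _ hi
        simp only [Finset.mem_range] at hi
        simp [hi]
  · intro k hk
    simp only [Finset.mem_filter, Finset.mem_piAntidiag] at hk
    obtain ⟨⟨h1, h2⟩, h3⟩ := hk
    have hz := key k h3
    rw [← Finset.sum_subset hsub (fun i hi hi' => hz i hi hi'), Finset.sum_range] at h1
    rw [← Finset.sum_subset hsub (fun i hi hi' => by rw [hz i hi hi', mul_zero]),
      Finset.sum_range] at h3
    simp only [Finset.mem_filter, Fintype.mem_piFinset, Finset.mem_range]
    refine ⟨?_, h1, ?_⟩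
    · intro a
      have : k a.1 ≤ ∑ i : Fin (t+1), k i.1 :=
        Finset.single_le_sum (f := fun i : Fin (t+1) => k i.1)
          (fun _ _ => Nat.zero_le _) (Finset.mem_univ a)
      omega
    · simp only [add_mul, one_mul, Finset.sum_add_distrib, h1, h3]
  · intro j hj
    funext i
    exact dif_pos i.2
  · intro k hk
    simp only [Finset.mem_filter, Finset.mem_piAntidiag] at hk
    obtain ⟨⟨h1, h2⟩, h3⟩ := hk
    have hz := key k h3
    funext i
    by_cases h : i < t + 1
    · simp [h]
    · simp only [h, dite_false]
      by_contra h0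
      exact h0 (hz i (h2 i (Ne.symm h0)) (by simpa using h)).symm
  · intro j hj
    simp only [Finset.mem_filter, Fintype.mem_piFinset, Finset.mem_range] at hj
    obtain ⟨-, h1, h2⟩ := hj
    set k : ℕ → ℕ := fun k => if h : k < t + 1 then j ⟨k, h⟩ else 0 with hkdef
    have hk0 : ∀ i, i ∉ Finset.range (t+1) → k i = 0 := by
      intro i hi
      simp only [Finset.mem_range] at hi
      exact dif_neg hi
    have hkj : ∀ i : Fin (t+1), k i.1 = j i := by intro i; exact dif_pos i.2
    have hs : ∑ i ∈ Finset.range (N+1), k i = p := by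
      rw [← Finset.sum_subset hsub (fun i _ hi => hk0 i hi), Finset.sum_range]
      simpa [hkj] using h1
    have hf : ∏ i ∈ Finset.range (N+1), (k i).factorial = ∏ i, (j i).factorial := by
      rw [← Finset.prod_subset hsub (fun i _ hi => by rw [hk0 i hi]; rfl), Finset.prod_range]
      simp [hkj]
    have hc' : ∏ i ∈ Finset.range (N+1), c i ^ k i = ∏ i : Fin (t+1), c i.1 ^ j i := by
      rw [← Finset.prod_subset hsub (fun i _ hi => by rw [hk0 i hi, pow_zero]), Finset.prod_range]
      simp [hkj]
    have hm := Nat.multinomial_spec (Finset.range (N+1)) k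
    rw [hs, hf] at hm
    rw [hc', ← hm]
    have e : ∀ i : Fin (t+1), ((i.1+1).factorial : ℝ) * c (i.1 + 1 - 1) / ((i.1+1).factorial : ℝ)
        = c i.1 := by
      intro i
      have : ((i.1+1).factorial : ℝ) ≠ 0 := by positivity
      rw [Nat.add_sub_cancel]
      field_simp
    simp only [e]
    have h4 : ((t+p).factorial : ℝ) ≠ 0 := by positivity
    have h5 : (∏ i, ((j i).factorial : ℝ)) ≠ 0 :=
      Finset.prod_ne_zero_iff.2 (fun i _ => by positivity)
    push_cast
    field_simp

/-- Let `y_n(x) = Σ_{t=0}^n c_t x^t` with `c_i = 0` for `i > n`. Then for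
every positive integer `p`,
`[y_n(x)]^p = Σ_{t=0}^{np} (p!/(t+p)!) · B_{t+p,p}(c_0, 2! c_1, …, (t+1)! c_t) · x^t`,
where the `k`-th Bell argument is `k! · c_{k−1}`. -/
theorem poly_power_bell (n : ℕ) (c : ℕ → ℝ) (hc : ∀ i, n < i → c i = 0)
    (p : ℕ) (hp : 0 < p) (x : ℝ) :
    (∑ t ∈ Finset.range (n + 1), c t * x ^ t) ^ p =
      ∑ t ∈ Finset.range (n * p + 1),
        (p.factorial : ℝ) / ((t + p).factorial : ℝ) *
          bellB (t + p) p (fun k => (k.factorial : ℝ) * c (k - 1)) * x ^ t := by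
  have hle : n ≤ n * p := Nat.le_mul_of_pos_right _ hp
  have hsub : Finset.range (n+1) ⊆ Finset.range (n*p+1) := by
    intro i; simp only [Finset.mem_range]; omega
  rw [Finset.sum_subset hsub (fun i _ hi => by
    rw [hc i (by simpa using hi), zero_mul]), Finset.sum_pow_eq_sum_piAntidiag]
  have hterm : ∀ k : ℕ → ℕ, ∏ i ∈ Finset.range (n*p+1), (c i * x ^ i) ^ k i =
      (∏ i ∈ Finset.range (n*p+1), c i ^ k i) *
        x ^ (∑ i ∈ Finset.range (n*p+1), i * k i) := by
    intro k
    simp only [mul_pow, Finset.prod_mul_distrib, ← pow_mul, Finset.prod_pow_eq_pow_sum]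
  simp only [hterm]
  rw [← Finset.sum_filter_of_ne (p := fun k : ℕ → ℕ =>
    ∑ i ∈ Finset.range (n*p+1), i * k i ∈ Finset.range (n*p+1))]
  · rw [← Finset.sum_fiberwise_of_maps_to (t := Finset.range (n*p+1))
      (g := fun k : ℕ → ℕ => ∑ i ∈ Finset.range (n*p+1), i * k i)
      (fun k hk => (Finset.mem_filter.1 hk).2)]
    refine Finset.sum_congr rfl fun t ht => ?_
    rw [bell_aux n p t (n*p) c (by simpa [Nat.lt_succ_iff] using ht), Finset.sum_mul,
      Finset.filter_filter]
    refine Finset.sum_congr ?_ ?_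
    · refine Finset.filter_congr fun k _ => ?_
      constructor
      · exact fun h => h.2
      · exact fun h => ⟨h ▸ ht, h⟩
    · intro k hk
      rw [(Finset.mem_filter.1 hk).2, mul_assoc]
  · intro k hk hne
    have hk1 := (Finset.mem_piAntidiag.1 hk).1
    rw [Finset.mem_range, Nat.lt_succ_iff]
    calc ∑ i ∈ Finset.range (n*p+1), i * k i ≤ ∑ i ∈ Finset.range (n*p+1), n * k i := by
          refine Finset.sum_le_sum fun i hi => ?_
          by_cases h0 : k i = 0
          · simp [h0]
          · refine Nat.mul_le_mul_right _ ?_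
            by_contra hin
            apply hne
            rw [Finset.prod_eq_zero hi (by rw [hc i (by omega), zero_pow h0])]
            simp
      _ = n * p := by rw [← Finset.mul_sum, hk1]
end

section
/- For every n ∈ ℕ and every even positive integer k, the Shannon length of the Rakhmanov density of the orthonormal Hermite polynomial satisfies the upper bound N[ρ_n] ≤ ( 2 (e k)^{1/k} / k ) · Γ(1/k) · ( ⟨x^k⟩_n )^{1/k}. -/
open MeasureTheory Real

open Polynomial in
/-- Polynomial version of the Hermite polynomials. -/
noncomputable def hermPoly : ℕ → Polynomial ℝ
  | 0 => 1
  | (n + 1) => 2 * X * hermPoly n - derivative (hermPoly n)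

open Polynomial in
lemma hermPoly_deriv (n : ℕ) :
    derivative (hermPoly (n + 1)) = C (2 * ((n : ℝ) + 1)) * hermPoly n := by
  induction n with
  | zero =>
    have : (C (2 : ℝ)) = 2 := rfl
    simp [hermPoly, this]
  | succ n ih =>
    rw [hermPoly, derivative_sub, derivative_mul, ih, derivative_mul]
    have h2 : hermPoly (n + 1) = 2 * X * hermPoly n - derivative (hermPoly n) := rfl
    rw [h2]
    simp only [derivative_mul, derivative_C, derivative_X, derivative_ofNat, C_mul, C_add, C_1,
      Nat.cast_add, Nat.cast_one]
    have : (C (2 : ℝ)) = 2 := rfl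
    have h3 : derivative (C (n : ℝ) + 1) = 0 := by simp
    rw [this, h3]
    ring

open Polynomial in
lemma hermPoly_eval (n : ℕ) (x : ℝ) : (hermPoly n).eval x = hermiteH n x := by
  induction n using Nat.twoStepInduction with
  | zero => simp [hermPoly, hermiteH]
  | one => simp [hermPoly, hermiteH]
  | more n h0 h1 =>
    rw [hermPoly, hermPoly_deriv]
    simp [hermiteH, h0, h1]

lemma poly_exp_integrable (P : Polynomial ℝ) {b : ℝ} (hb : 0 < b) :
    Integrable (fun x : ℝ => P.eval x * Real.exp (-b * x ^ 2)) := by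
  induction P using Polynomial.induction_on' with
  | add p q hp hq =>
    refine (hp.add hq).congr (Filter.Eventually.of_forall fun x => ?_)
    simp [add_mul]
  | monomial n a =>
    have h := integrable_rpow_mul_exp_neg_mul_sq hb (s := (n : ℝ))
      (by have : (0 : ℝ) ≤ n := n.cast_nonneg
          linarith)
    refine (h.const_mul a).congr (Filter.Eventually.of_forall fun x => ?_)
    simp [mul_assoc]

lemma poly_exp_integrable_one (P : Polynomial ℝ) :
    Integrable (fun x : ℝ => P.eval x * Real.exp (-x ^ 2)) := by
  simpa using poly_exp_integrable P one_pos

open Polynomial in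
lemma poly_parts (P : Polynomial ℝ) :
    ∫ x : ℝ, (derivative P - 2 * X * P).eval x * Real.exp (-x ^ 2) = 0 := by
  apply integral_eq_zero_of_hasDerivAt_of_integrable
    (f := fun x : ℝ => P.eval x * Real.exp (-x ^ 2)) _
    (poly_exp_integrable_one _) (poly_exp_integrable_one _)
  intro x
  have h1 := P.hasDerivAt x
  have h2 : HasDerivAt (fun x : ℝ => Real.exp (-x ^ 2)) (Real.exp (-x ^ 2) * (-(2 * x))) x := by
    have := ((hasDerivAt_pow 2 x).fun_neg).exp
    simpa using this
  refine (h1.fun_mul h2).congr_deriv ?_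
  simp only [Polynomial.eval_sub, Polynomial.eval_mul, Polynomial.eval_X, Polynomial.eval_ofNat]
  ring

open Polynomial in
lemma herm_norm (n : ℕ) :
    ∫ x : ℝ, (hermPoly n * hermPoly n).eval x * Real.exp (-x ^ 2) =
      2 ^ n * (n.factorial : ℝ) * Real.sqrt π := by
  induction n with
  | zero =>
    have := integral_gaussian 1
    simpa [hermPoly] using this
  | succ n ih =>
    have h := poly_parts (hermPoly n * hermPoly (n + 1))
    have e : derivative (hermPoly n * hermPoly (n + 1)) - 2 * X * (hermPoly n * hermPoly (n + 1))
        = C (2 * ((n : ℝ) + 1)) * (hermPoly n * hermPoly n)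
          - hermPoly (n + 1) * hermPoly (n + 1) := by
      rw [derivative_mul, hermPoly_deriv]
      have h2 : derivative (hermPoly n) = 2 * X * hermPoly n - hermPoly (n + 1) := by
        rw [hermPoly]; ring
      rw [h2]; ring
    rw [e] at h
    simp only [eval_sub, sub_mul] at h
    rw [integral_sub (poly_exp_integrable_one _) (poly_exp_integrable_one _)] at h
    have e2 : ∫ x : ℝ, (C (2 * ((n : ℝ) + 1)) * (hermPoly n * hermPoly n)).eval x
        * Real.exp (-x ^ 2) = (2 * ((n : ℝ) + 1)) * (2 ^ n * (n.factorial : ℝ) * Real.sqrt π) := by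
      rw [← ih, ← integral_const_mul]
      congr 1; ext x
      rw [eval_C_mul, mul_assoc]
    rw [e2] at h
    rw [Nat.factorial_succ]
    push_cast
    rw [pow_succ]
    linarith

lemma herm_const_pos (n : ℕ) : 0 < 2 ^ n * (n.factorial : ℝ) * Real.sqrt π := by
  have : (0 : ℝ) < n.factorial := by exact_mod_cast n.factorial_pos
  have := Real.sqrt_pos.2 Real.pi_pos
  positivity

lemma rho_nonneg (n : ℕ) (x : ℝ) : 0 ≤ hermiteρ n x := by
  unfold hermiteρ
  have := herm_const_pos n
  positivity

lemma rho_eq (n : ℕ) (x : ℝ) : hermiteρ n x =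
    (hermPoly n * hermPoly n).eval x * Real.exp (-x ^ 2)
      / (2 ^ n * (n.factorial : ℝ) * Real.sqrt π) := by
  unfold hermiteρ
  rw [Polynomial.eval_mul, hermPoly_eval, sq (hermiteH n x)]

lemma rho_integrable (n : ℕ) : Integrable (hermiteρ n) := by
  have := (poly_exp_integrable_one (hermPoly n * hermPoly n)).div_const
    (2 ^ n * (n.factorial : ℝ) * Real.sqrt π)
  exact this.congr (Filter.Eventually.of_forall fun x => (rho_eq n x).symm)

lemma rho_integral (n : ℕ) : ∫ x, hermiteρ n x = 1 := by
  simp only [rho_eq]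
  rw [integral_div, herm_norm, div_self (herm_const_pos n).ne']

lemma rho_moment_integrable (n k : ℕ) : Integrable (fun x => x ^ k * hermiteρ n x) := by
  have := (poly_exp_integrable_one (Polynomial.X ^ k * (hermPoly n * hermPoly n))).div_const
    (2 ^ n * (n.factorial : ℝ) * Real.sqrt π)
  refine this.congr (Filter.Eventually.of_forall fun x => ?_)
  simp only [rho_eq, Polynomial.eval_mul, Polynomial.eval_pow, Polynomial.eval_X]
  ring

lemma rho_sq_integrable (n : ℕ) : Integrable (fun x => hermiteρ n x * hermiteρ n x) := by
  have := (poly_exp_integrable ((hermPoly n * hermPoly n) * (hermPoly n * hermPoly n))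
    two_pos).div_const ((2 ^ n * (n.factorial : ℝ) * Real.sqrt π) ^ 2)
  refine this.congr (Filter.Eventually.of_forall fun x => ?_)
  have e : Real.exp (-2 * x ^ 2) = Real.exp (-x ^ 2) * Real.exp (-x ^ 2) := by
    rw [← Real.exp_add]; congr 1; ring
  simp only [rho_eq, Polynomial.eval_mul, e]
  have := (herm_const_pos n).ne'
  field_simp

lemma rho_moment_pos (n k : ℕ) (hke : Even k) : 0 < ∫ x, x ^ k * hermiteρ n x := by
  have hnn : ∀ x : ℝ, 0 ≤ x ^ k * hermiteρ n x := fun x =>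
    mul_nonneg (hke.pow_nonneg x) (rho_nonneg n x)
  refine lt_of_le_of_ne (integral_nonneg hnn) fun h => ?_
  rw [eq_comm, integral_eq_zero_iff_of_nonneg hnn (rho_moment_integrable n k)] at h
  have h0 : ∀ᵐ x : ℝ, x ≠ 0 := Measure.ae_ne volume 0
  have h1 : hermiteρ n =ᵐ[volume] 0 := by
    filter_upwards [h, h0] with x hx hx0
    have := hx
    simp only [Pi.zero_apply, mul_eq_zero] at this
    rcases this with h | h
    · exact absurd h (pow_ne_zero k hx0)
    · simpa using h
  have h2 := integral_congr_ae h1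
  rw [rho_integral] at h2
  simp at h2

lemma exp_integral (k : ℕ) (hk : 0 < k) (hke : Even k) {b : ℝ} (hb : 0 < b) :
    ∫ x : ℝ, Real.exp (-b * x ^ k) =
      2 / (k : ℝ) * Real.Gamma (1 / (k : ℝ)) * (b⁻¹) ^ ((1 : ℝ) / k) := by
  have hk' : (0 : ℝ) < k := by exact_mod_cast hk
  have h := integral_exp_neg_mul_rpow hk' hb
  have h2 := integral_comp_abs (f := fun x : ℝ => Real.exp (-b * x ^ k))
  simp only [hke.pow_abs] at h2
  rw [h2]
  simp only [Real.rpow_natCast] at h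
  rw [h, Real.Gamma_add_one (by positivity), Real.inv_rpow hb.le, ← Real.rpow_neg hb.le]
  rw [neg_div]
  ring

lemma gibbs_pt {r q : ℝ} (hr : 0 ≤ r) (hq : 0 < q) :
    r * Real.log q + (r - q) ≤ r * Real.log r := by
  rcases hr.eq_or_lt with h | h
  · subst h; simp; exact hq.le
  · have := Real.log_le_sub_one_of_pos (div_pos hq h)
    rw [Real.log_div hq.ne' h.ne'] at this
    have h3 := mul_le_mul_of_nonneg_left this h.le
    have : r * (q / r - 1) = q - r := by field_simp
    rw [this] at h3
    linarith

/-- For every `n ∈ ℕ` and every even positive integer `k`, the Shannon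
length `N[ρ_n] = exp(−∫ ρ_n log ρ_n)` of the Rakhmanov density of the orthonormal Hermite
polynomial satisfies `N[ρ_n] ≤ (2(ek)^{1/k}/k) Γ(1/k) ⟨x^k⟩_n^{1/k}`. -/
theorem hermite_shannon_bound (n k : ℕ) (hk : 0 < k) (hke : Even k) :
    Real.exp (-∫ x : ℝ, hermiteρ n x * Real.log (hermiteρ n x)) ≤
      2 * (Real.exp 1 * (k : ℝ)) ^ ((1 : ℝ) / k) / (k : ℝ) * Real.Gamma (1 / (k : ℝ)) *
        (∫ x : ℝ, x ^ k * hermiteρ n x) ^ ((1 : ℝ) / k) := by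
  have hk' : (0 : ℝ) < k := by exact_mod_cast hk
  have hm := rho_moment_pos n k hke
  have hmi := rho_moment_integrable n k
  set m := ∫ x : ℝ, x ^ k * hermiteρ n x with hmdef
  obtain ⟨b, hbdef⟩ : ∃ b : ℝ, b = (k * m)⁻¹ := ⟨_, rfl⟩
  have hb : 0 < b := by rw [hbdef]; positivity
  have hZ := exp_integral k hk hke hb
  have hG : 0 < Real.Gamma (1 / (k : ℝ)) := Real.Gamma_pos_of_pos (by positivity)
  obtain ⟨Z, hZdef⟩ : ∃ Z : ℝ, Z = 2 / (k : ℝ) * Real.Gamma (1 / (k : ℝ)) *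
    (b⁻¹) ^ ((1 : ℝ) / k) := ⟨_, rfl⟩
  have hZpos : 0 < Z := by
    rw [hZdef]
    have := Real.rpow_pos_of_pos (inv_pos.2 hb) ((1 : ℝ) / k)
    positivity
  rw [← hZdef] at hZ
  have hqi : Integrable (fun x : ℝ => Real.exp (-b * x ^ k) / Z) := by
    refine Integrable.div_const (Integrable.of_integral_ne_zero ?_) _
    rw [hZ]; exact hZpos.ne'
  have hlow : ∀ x : ℝ, (-b) * (x ^ k * hermiteρ n x) - Real.log Z * hermiteρ n x
      + (hermiteρ n x - Real.exp (-b * x ^ k) / Z) ≤ hermiteρ n x * Real.log (hermiteρ n x) := by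
    intro x
    have := gibbs_pt (rho_nonneg n x) (q := Real.exp (-b * x ^ k) / Z) (by positivity)
    rw [Real.log_div (Real.exp_pos _).ne' hZpos.ne', Real.log_exp] at this
    linarith
  have hup : ∀ x : ℝ, hermiteρ n x * Real.log (hermiteρ n x) ≤ hermiteρ n x * hermiteρ n x :=
    fun x => mul_le_mul_of_nonneg_left (Real.log_le_self (rho_nonneg n x)) (rho_nonneg n x)
  have hA : Integrable (fun x => (-b) * (x ^ k * hermiteρ n x) - Real.log Z * hermiteρ n x) := (hmi.const_mul (-b)).sub ((rho_integrable n).const_mul (Real.log Z))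
  have hB : Integrable (fun x => hermiteρ n x - Real.exp (-b * x ^ k) / Z) := (rho_integrable n).sub hqi
  have hL := hA.add hB
  have hmeas : AEStronglyMeasurable (fun x => hermiteρ n x * Real.log (hermiteρ n x)) volume := by
    have := (rho_integrable n).1.aemeasurable
    exact (this.mul (Real.measurable_log.comp_aemeasurable this)).aestronglyMeasurable
  have hint : Integrable (fun x => hermiteρ n x * Real.log (hermiteρ n x)) :=
    integrable_of_le_of_le hmeas (Filter.Eventually.of_forall hlow)
      (Filter.Eventually.of_forall hup) hL (rho_sq_integrable n)
  have hmono := integral_mono hL hint hlow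
  have hval : ∫ x, (-b) * (x ^ k * hermiteρ n x) - Real.log Z * hermiteρ n x
      + (hermiteρ n x - Real.exp (-b * x ^ k) / Z) = -(1 / (k : ℝ)) - Real.log Z := by
    rw [integral_add hA hB, integral_sub (hmi.const_mul (-b))
      ((rho_integrable n).const_mul (Real.log Z)), integral_sub (rho_integrable n) hqi,
      integral_const_mul, integral_const_mul, integral_div, hZ, rho_integral, ← hmdef,
      div_self hZpos.ne', hbdef]
    field_simp
    ring
  have hmono' : -(1 / (k : ℝ)) - Real.log Z ≤ ∫ x, hermiteρ n x * Real.log (hermiteρ n x) :=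
    hval ▸ hmono
  calc Real.exp (-∫ x : ℝ, hermiteρ n x * Real.log (hermiteρ n x))
      ≤ Real.exp (1 / (k : ℝ) + Real.log Z) := Real.exp_le_exp.2 (by linarith)
    _ = Real.exp (1 / (k : ℝ)) * Z := by rw [Real.exp_add, Real.exp_log hZpos]
    _ = _ := by
      rw [hZdef, hbdef, inv_inv, Real.mul_rpow hk'.le hm.le,
        Real.mul_rpow (Real.exp_pos 1).le hk'.le, Real.exp_one_rpow]
      ring
end
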